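/- In the antithetic Milstein setting, let X^f(t) and X^a(t) denote the piecewise linear interpolants of the fine and antithetic paths on the fine grid of spacing Δt/2, let X^c(t) denote the piecewise linear interpolant of the coarse path on the coarse grid of spacing Δt, and let X̄(t) = (X^f(t) + X^a(t))/2. Then for every real p ≥ 2 there exists a constant K_p, depending only on p, T, f and g, such that for every N ≥ 1 (with Δt = T/N): sup_{0 ≤ t ≤ T} E[ ‖X^f(t) − X^a(t)‖^p ] ≤ K_p · Δt^{p/2} and sup_{0 ≤ t ≤ T} E[ ‖X̄(t) − X^c(t)‖^p ] ≤ K_p · Δt^p. -/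

import Mathlib

open MeasureTheory ProbabilityTheory

/-- `h_{ijk}(x) = ½ ∑_l g_{lj}(x) ∂g_{ik}/∂x_l (x)`. -/
noncomputable def milsteinH {d m : ℕ} (g : (Fin d → ℝ) → Fin d → Fin m → ℝ)
    (x : Fin d → ℝ) (i : Fin d) (j k : Fin m) : ℝ :=
  1 / 2 * ∑ l : Fin d, g x l j * fderiv ℝ (fun y => g y i k) x (Pi.single l 1)

/-- One step of the Milstein scheme with the Lévy areas omitted:
`x_i ↦ x_i + f_i(x) dt + ∑_j g_{ij}(x) dw_j + ∑_{j,k} h_{ijk}(x)(dw_j dw_k − δ_{jk} dt)`. -/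
noncomputable def milsteinStep {d m : ℕ} (f : (Fin d → ℝ) → Fin d → ℝ)
    (g : (Fin d → ℝ) → Fin d → Fin m → ℝ) (dt : ℝ)
    (x : Fin d → ℝ) (dw : Fin m → ℝ) : Fin d → ℝ :=
  fun i => x i + f x i * dt + (∑ j : Fin m, g x i j * dw j)
    + ∑ j : Fin m, ∑ k : Fin m,
        milsteinH g x i j k * (dw j * dw k - if j = k then dt else 0)

/-- Piecewise linear interpolant of a discrete path `X : ℕ → ℝ^d` on the uniform grid of
spacing `s`: on `[k s, (k+1) s]`, `X(t) = (1−λ) X_k + λ X_{k+1}` with `λ = (t − k s)/s`. -/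
noncomputable def plInterp {d : ℕ} (s : ℝ) (X : ℕ → Fin d → ℝ) (t : ℝ) : Fin d → ℝ :=
  X (⌊t / s⌋.toNat) + ((t - (⌊t / s⌋.toNat : ℝ) * s) / s) • (X (⌊t / s⌋.toNat + 1) - X (⌊t / s⌋.toNat))

set_option linter.unusedSectionVars false

namespace AMil

/-- Measurable with all moments finite. -/
def AM {Ω : Type} [MeasurableSpace Ω] (μ : Measure Ω) (Y : Ω → ℝ) : Prop :=
  Measurable Y ∧ ∀ q : ℕ, Integrable (fun ω => |Y ω| ^ q) μ

lemma abs_add_pow_le (a b : ℝ) (q : ℕ) : |a + b| ^ q ≤ 2 ^ q * (|a| ^ q + |b| ^ q) := by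
  have h1 : |a + b| ^ q ≤ (|a| + |b|) ^ q := pow_le_pow_left₀ (abs_nonneg _) (abs_add_le _ _) _
  have h2 := add_pow_le (abs_nonneg a) (abs_nonneg b) q
  have h3 : (2 : ℝ) ^ (q - 1) ≤ 2 ^ q := pow_le_pow_right₀ (by norm_num) (Nat.sub_le _ _)
  have h4 : 0 ≤ |a| ^ q + |b| ^ q := by positivity
  nlinarith [mul_le_mul_of_nonneg_right h3 h4]

lemma abs_mul_pow_le (a b : ℝ) (q : ℕ) : |a * b| ^ q ≤ |a| ^ (2 * q) + |b| ^ (2 * q) := by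
  rw [abs_mul, mul_pow, pow_mul', pow_mul']
  nlinarith [sq_nonneg (|a| ^ q - |b| ^ q), sq_nonneg (|a| ^ q), sq_nonneg (|b| ^ q)]

section AMs
variable {Ω : Type} [MeasurableSpace Ω] {μ : Measure Ω}

lemma AM.dom {Y Z : Ω → ℝ} (hZ : AM μ Z) (hY : Measurable Y) (h : ∀ ω, |Y ω| ≤ |Z ω|) :
    AM μ Y := by
  refine ⟨hY, fun q => (hZ.2 q).mono' (by fun_prop) (ae_of_all _ fun ω => ?_)⟩
  rw [Real.norm_of_nonneg (by positivity)]
  exact pow_le_pow_left₀ (abs_nonneg _) (h ω) _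

lemma AM.add {Y Z : Ω → ℝ} (hY : AM μ Y) (hZ : AM μ Z) : AM μ (fun ω => Y ω + Z ω) := by
  have h1 := hY.1
  have h2 := hZ.1
  refine ⟨by fun_prop, fun q => (((hY.2 q).add (hZ.2 q)).const_mul (2 ^ q)).mono' (by fun_prop)
    (ae_of_all _ fun ω => ?_)⟩
  rw [Real.norm_of_nonneg (by positivity)]
  exact abs_add_pow_le _ _ _

lemma AM.mul {Y Z : Ω → ℝ} (hY : AM μ Y) (hZ : AM μ Z) : AM μ (fun ω => Y ω * Z ω) := by
  have h1 := hY.1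
  have h2 := hZ.1
  refine ⟨by fun_prop, fun q => ((hY.2 (2 * q)).add (hZ.2 (2 * q))).mono' (by fun_prop)
    (ae_of_all _ fun ω => ?_)⟩
  rw [Real.norm_of_nonneg (by positivity)]
  exact abs_mul_pow_le _ _ _

lemma AM.const [IsFiniteMeasure μ] (c : ℝ) : AM μ (fun _ => c) :=
  ⟨measurable_const, fun _ => integrable_const _⟩

lemma AM.abs {Y : Ω → ℝ} (hY : AM μ Y) : AM μ (fun ω => |Y ω|) :=
  hY.dom (by have := hY.1; fun_prop) (fun ω => by simp)

lemma AM.neg {Y : Ω → ℝ} (hY : AM μ Y) : AM μ (fun ω => - Y ω) :=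
  hY.dom (by have := hY.1; fun_prop) (fun ω => by simp)

lemma AM.sub {Y Z : Ω → ℝ} (hY : AM μ Y) (hZ : AM μ Z) : AM μ (fun ω => Y ω - Z ω) := by
  simpa [sub_eq_add_neg] using hY.add hZ.neg

lemma AM.sum [IsFiniteMeasure μ] {κ : Type*} (s : Finset κ) {Y : κ → Ω → ℝ}
    (hY : ∀ k ∈ s, AM μ (Y k)) : AM μ (fun ω => ∑ k ∈ s, Y k ω) := by
  classical
  induction s using Finset.induction_on with
  | empty => simpa using AM.const 0
  | insert a s ha ih =>
    simp only [Finset.sum_insert ha]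
    exact (hY a (by simp)).add (ih fun k hk => hY k (by simp [hk]))

lemma AM.pow [IsFiniteMeasure μ] {Y : Ω → ℝ} (hY : AM μ Y) (n : ℕ) : AM μ (fun ω => Y ω ^ n) := by
  induction n with
  | zero => simpa using AM.const 1
  | succ n ih => simpa [pow_succ] using ih.mul hY

lemma AM.integrable {Y : Ω → ℝ} (hY : AM μ Y) : Integrable Y μ := by
  have := hY.2 1
  simp only [pow_one] at this
  exact (integrable_norm_iff hY.1.aestronglyMeasurable).1 this

end AMs

section Fam
variable {J : Type 1} {Ω : J → Type} {𝓕 𝓖 𝓗 : ∀ j, MeasurableSpace (Ω j)} [∀ j, MeasurableSpace (Ω j)] {μ : ∀ j, Measure (Ω j)}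
  {r : J → ℝ}

/-- `Y = O(r^k)` in every `L^q`, uniformly over the family. -/
def OL (μ : ∀ j, Measure (Ω j)) (r : J → ℝ) (k : ℕ) (Y : ∀ j, Ω j → ℝ) : Prop :=
  (∀ j, AM (μ j) (Y j)) ∧ ∀ q : ℕ, ∃ K : ℝ, ∀ j, ∫ ω, |Y j ω / r j ^ k| ^ q ∂(μ j) ≤ K

lemma AM.div {Ω : Type} [MeasurableSpace Ω] {μ : Measure Ω} [IsFiniteMeasure μ] {Y : Ω → ℝ}
    (hY : AM μ Y) (c : ℝ) : AM μ (fun ω => Y ω / c) := by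
  simpa [div_eq_mul_inv] using hY.mul (AM.const c⁻¹)

variable [∀ j, IsProbabilityMeasure (μ j)]

lemma OL.dom {k : ℕ} {Y Z : ∀ j, Ω j → ℝ} (hZ : OL μ r k Z) (hY : ∀ j, Measurable (Y j))
    (h : ∀ j ω, |Y j ω| ≤ |Z j ω|) : OL μ r k Y := by
  have hY' : ∀ j, AM (μ j) (Y j) := fun j => (hZ.1 j).dom (hY j) (h j)
  refine ⟨hY', fun q => ?_⟩
  obtain ⟨K, hK⟩ := hZ.2 q
  refine ⟨K, fun j => (integral_mono (((hY' j).div _).2 q) (((hZ.1 j).div _).2 q) ?_).trans (hK j)⟩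
  intro ω
  simp only [abs_div]
  exact pow_le_pow_left₀ (by positivity) (div_le_div_of_nonneg_right (h j ω) (abs_nonneg _)) _

lemma OL.add {k : ℕ} {Y Z : ∀ j, Ω j → ℝ} (hY : OL μ r k Y) (hZ : OL μ r k Z) :
    OL μ r k (fun j ω => Y j ω + Z j ω) := by
  refine ⟨fun j => (hY.1 j).add (hZ.1 j), fun q => ?_⟩
  obtain ⟨K, hK⟩ := hY.2 q
  obtain ⟨K', hK'⟩ := hZ.2 q
  refine ⟨2 ^ q * (K + K'), fun j => ?_⟩
  have i1 := ((hY.1 j).div (r j ^ k)).2 q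
  have i2 := ((hZ.1 j).div (r j ^ k)).2 q
  calc _ ≤ ∫ ω, 2 ^ q * (|Y j ω / r j ^ k| ^ q + |Z j ω / r j ^ k| ^ q) ∂(μ j) := by
        refine integral_mono ((((hY.1 j).add (hZ.1 j)).div (r j ^ k)).2 q)
          ((i1.add i2).const_mul _) fun ω => ?_
        simp only [add_div]
        exact abs_add_pow_le _ _ _
    _ = 2 ^ q * (∫ ω, |Y j ω / r j ^ k| ^ q ∂(μ j) + ∫ ω, |Z j ω / r j ^ k| ^ q ∂(μ j)) := by
        rw [integral_const_mul, integral_add i1 i2]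
    _ ≤ _ := by gcongr; exacts [hK j, hK' j]

lemma OL.mul {k l : ℕ} {Y Z : ∀ j, Ω j → ℝ} (hY : OL μ r k Y) (hZ : OL μ r l Z) :
    OL μ r (k + l) (fun j ω => Y j ω * Z j ω) := by
  refine ⟨fun j => (hY.1 j).mul (hZ.1 j), fun q => ?_⟩
  obtain ⟨K, hK⟩ := hY.2 (2 * q)
  obtain ⟨K', hK'⟩ := hZ.2 (2 * q)
  refine ⟨(K + K'), fun j => ?_⟩
  have i1 := ((hY.1 j).div (r j ^ k)).2 (2 * q)
  have i2 := ((hZ.1 j).div (r j ^ l)).2 (2 * q)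
  calc _ ≤ ∫ ω, (|Y j ω / r j ^ k| ^ (2 * q) + |Z j ω / r j ^ l| ^ (2 * q)) ∂(μ j) := by
        refine integral_mono ((((hY.1 j).mul (hZ.1 j)).div (r j ^ (k + l))).2 q)
          (i1.add i2) fun ω => ?_
        have : Y j ω * Z j ω / r j ^ (k + l) = (Y j ω / r j ^ k) * (Z j ω / r j ^ l) := by
          rw [pow_add, div_mul_div_comm]
        simp only [this]
        exact abs_mul_pow_le _ _ _
    _ = (∫ ω, |Y j ω / r j ^ k| ^ (2 * q) ∂(μ j) + ∫ ω, |Z j ω / r j ^ l| ^ (2 * q) ∂(μ j)) := by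
        rw [integral_add i1 i2]
    _ ≤ _ := by gcongr; exacts [hK j, hK' j]

/-- deterministic families -/
lemma OL.det {k : ℕ} {c : J → ℝ} {K : ℝ} (h : ∀ j, |c j / r j ^ k| ≤ K) :
    OL μ r k (fun j _ => c j) := by
  refine ⟨fun j => AM.const _, fun q => ⟨K ^ q, fun j => ?_⟩⟩
  simp only [integral_const, probReal_univ, one_smul]
  exact pow_le_pow_left₀ (abs_nonneg _) (h j) _

lemma OL.const (c : ℝ) : OL μ r 0 (fun _ _ => c) := OL.det (K := |c|) (fun j => by simp)

lemma OL.congr {k : ℕ} {Y Z : ∀ j, Ω j → ℝ} (hY : OL μ r k Y) (h : ∀ j ω, Z j ω = Y j ω) :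
    OL μ r k Z := by
  have : Z = Y := by funext j ω; exact h j ω
  rwa [this]

lemma OL.const_mul {k : ℕ} {Y : ∀ j, Ω j → ℝ} (hY : OL μ r k Y) (c : ℝ) :
    OL μ r k (fun j ω => c * Y j ω) := by
  simpa using (OL.const c).mul hY

lemma OL.neg {k : ℕ} {Y : ∀ j, Ω j → ℝ} (hY : OL μ r k Y) :
    OL μ r k (fun j ω => - Y j ω) := (hY.const_mul (-1)).congr (by simp)

lemma OL.sub {k : ℕ} {Y Z : ∀ j, Ω j → ℝ} (hY : OL μ r k Y) (hZ : OL μ r k Z) :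
    OL μ r k (fun j ω => Y j ω - Z j ω) := (hY.add hZ.neg).congr (fun _ _ => by ring)

lemma OL.abs {k : ℕ} {Y : ∀ j, Ω j → ℝ} (hY : OL μ r k Y) :
    OL μ r k (fun j ω => |Y j ω|) := hY.dom (fun j => (hY.1 j).abs.1) (by simp)

lemma OL.zero {k : ℕ} : OL μ r k (fun _ _ => 0) := OL.det (K := 0) (by simp)

lemma OL.sum {k : ℕ} {κ : Type*} (s : Finset κ) {Y : κ → ∀ j, Ω j → ℝ}
    (hY : ∀ i ∈ s, OL μ r k (Y i)) : OL μ r k (fun j ω => ∑ i ∈ s, Y i j ω) := by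
  classical
  induction s using Finset.induction_on with
  | empty => simpa using OL.zero
  | insert a s ha ih =>
    simp only [Finset.sum_insert ha]
    exact (hY a (by simp)).add (ih fun k hk => hY k (by simp [hk]))

lemma OL.mono {R : ℝ} (hr : ∀ j, 0 < r j ∧ r j ≤ R) {k l : ℕ} (hlk : l ≤ k) {Y : ∀ j, Ω j → ℝ}
    (hY : OL μ r k Y) : OL μ r l Y := by
  have h1 : OL μ r 0 (fun j _ => r j ^ (k - l)) := OL.det (K := R ^ (k - l)) (fun j => by
    have := (hr j).1
    rw [pow_zero, div_one, abs_of_pos (by positivity)]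
    exact pow_le_pow_left₀ this.le (hr j).2 _)
  have h2 : OL μ r l (fun j ω => Y j ω / r j ^ (k - l)) := by
    refine ⟨fun j => (hY.1 j).div _, fun q => ?_⟩
    obtain ⟨K, hK⟩ := hY.2 q
    refine ⟨K, fun j => le_of_eq_of_le ?_ (hK j)⟩
    have : ∀ ω, Y j ω / r j ^ (k - l) / r j ^ l = Y j ω / r j ^ k := fun ω => by
      rw [div_div, ← pow_add, Nat.sub_add_cancel hlk]
    simp [this]
  refine (h1.mul h2).congr (fun j ω => ?_) |> fun h => by simpa using h
  have := (hr j).1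
  field_simp


variable (𝓕 μ r) in
/-- martingale difference of size `O(r^k)` -/
def Mart (k : ℕ)
    (Y : ∀ j, Ω j → ℝ) : Prop :=
  OL μ r k Y ∧ ∀ j, ∀ Z : Ω j → ℝ, Measurable[𝓕 j] Z → AM (μ j) Z →
    ∫ ω, Z ω * Y j ω ∂(μ j) = 0

lemma Mart.congr {k : ℕ} {Y Z : ∀ j, Ω j → ℝ} (hY : Mart 𝓕 μ r k Y)
    (h : ∀ j ω, Z j ω = Y j ω) : Mart 𝓕 μ r k Z := by
  have : Z = Y := by funext j ω; exact h j ω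
  rwa [this]

lemma Mart.add {k : ℕ} {Y Z : ∀ j, Ω j → ℝ} (hY : Mart 𝓕 μ r k Y) (hZ : Mart 𝓕 μ r k Z) :
    Mart 𝓕 μ r k (fun j ω => Y j ω + Z j ω) := by
  refine ⟨hY.1.add hZ.1, fun j X hX hX' => ?_⟩
  simp only [mul_add]
  rw [integral_add (hX'.mul (hY.1.1 j)).integrable (hX'.mul (hZ.1.1 j)).integrable,
    hY.2 j X hX hX', hZ.2 j X hX hX', add_zero]

lemma Mart.const_mul {k : ℕ} {Y : ∀ j, Ω j → ℝ} (hY : Mart 𝓕 μ r k Y) (c : ℝ) :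
    Mart 𝓕 μ r k (fun j ω => c * Y j ω) := by
  refine ⟨hY.1.const_mul c, fun j X hX hX' => ?_⟩
  simp only [mul_left_comm _ c]
  rw [integral_const_mul, hY.2 j X hX hX', mul_zero]

lemma Mart.neg {k : ℕ} {Y : ∀ j, Ω j → ℝ} (hY : Mart 𝓕 μ r k Y) :
    Mart 𝓕 μ r k (fun j ω => - Y j ω) := (hY.const_mul (-1)).congr (by simp)

lemma Mart.sub {k : ℕ} {Y Z : ∀ j, Ω j → ℝ} (hY : Mart 𝓕 μ r k Y) (hZ : Mart 𝓕 μ r k Z) :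
    Mart 𝓕 μ r k (fun j ω => Y j ω - Z j ω) := (hY.add hZ.neg).congr (fun _ _ => by ring)

lemma Mart.zero {k : ℕ} : Mart 𝓕 μ r k (fun _ _ => 0) := ⟨OL.zero, by simp⟩

lemma Mart.sum {k : ℕ} {κ : Type*} (s : Finset κ) {Y : κ → ∀ j, Ω j → ℝ}
    (hY : ∀ i ∈ s, Mart 𝓕 μ r k (Y i)) : Mart 𝓕 μ r k (fun j ω => ∑ i ∈ s, Y i j ω) := by
  classical
  induction s using Finset.induction_on with
  | empty => simpa using Mart.zero
  | insert a s ha ih =>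
    simp only [Finset.sum_insert ha]
    exact (hY a (by simp)).add (ih fun k hk => hY k (by simp [hk]))

lemma Mart.mono {R : ℝ} (hr : ∀ j, 0 < r j ∧ r j ≤ R) {k l : ℕ} (hlk : l ≤ k)
    {Y : ∀ j, Ω j → ℝ} (hY : Mart 𝓕 μ r k Y) : Mart 𝓕 μ r l Y := ⟨hY.1.mono hr hlk, hY.2⟩

lemma Mart.of_mul {k l : ℕ} {A ξ : ∀ j, Ω j → ℝ}
    (hA : OL μ r k A) (hξ : OL μ r l ξ) (hFG : ∀ j, 𝓕 j ≤ 𝓖 j)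
    (hAm : ∀ j, Measurable[𝓖 j] (A j)) (hξm : ∀ j, Measurable[𝓗 j] (ξ j))
    (hind : ∀ j, Indep (𝓖 j) (𝓗 j) (μ j)) (h0 : ∀ j, ∫ ω, ξ j ω ∂(μ j) = 0) :
    Mart 𝓕 μ r (k + l) (fun j ω => A j ω * ξ j ω) := by
  refine ⟨hA.mul hξ, fun j Z hZ hZ' => ?_⟩
  have hZA : Measurable[𝓖 j] (fun ω => Z ω * A j ω) :=
    Measurable.mul (hZ.mono (hFG j) le_rfl) (hAm j)
  have hi : IndepFun (fun ω => Z ω * A j ω) (ξ j) (μ j) :=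
    indep_of_indep_of_le_left (indep_of_indep_of_le_right (hind j) (hξm j).comap_le) hZA.comap_le
  have := hi.integral_mul_eq_mul_integral (hZ'.mul (hA.1 j)).1.aestronglyMeasurable
    (hξ.1 j).1.aestronglyMeasurable
  rw [h0 j, mul_zero] at this
  rw [← this]
  simp [mul_assoc]

variable (𝓕 μ r) in
/-- remainder class: `O(r^(k+2))` plus a martingale difference `O(r^(k+1))`. -/
def Rem (k : ℕ)
    (Y : ∀ j, Ω j → ℝ) : Prop :=
  ∃ u v : ∀ j, Ω j → ℝ, OL μ r (k + 2) u ∧ Mart 𝓕 μ r (k + 1) v ∧ ∀ j ω, Y j ω = u j ω + v j ω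

lemma Rem.congr {k : ℕ} {Y Z : ∀ j, Ω j → ℝ} (hY : Rem 𝓕 μ r k Y)
    (h : ∀ j ω, Z j ω = Y j ω) : Rem 𝓕 μ r k Z := by
  have : Z = Y := by funext j ω; exact h j ω
  rwa [this]

lemma Rem.of_OL {k : ℕ} {Y : ∀ j, Ω j → ℝ} (hY : OL μ r (k + 2) Y) : Rem 𝓕 μ r k Y :=
  ⟨Y, fun _ _ => 0, hY, Mart.zero, by simp⟩

lemma Rem.of_Mart {k : ℕ} {Y : ∀ j, Ω j → ℝ} (hY : Mart 𝓕 μ r (k + 1) Y) : Rem 𝓕 μ r k Y :=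
  ⟨fun _ _ => 0, Y, OL.zero, hY, by simp⟩

lemma Rem.add {k : ℕ} {Y Z : ∀ j, Ω j → ℝ} (hY : Rem 𝓕 μ r k Y) (hZ : Rem 𝓕 μ r k Z) :
    Rem 𝓕 μ r k (fun j ω => Y j ω + Z j ω) := by
  obtain ⟨u, v, hu, hv, h⟩ := hY
  obtain ⟨u', v', hu', hv', h'⟩ := hZ
  exact ⟨_, _, hu.add hu', hv.add hv', fun j ω => by simp only [h, h']; ring⟩

lemma Rem.const_mul {k : ℕ} {Y : ∀ j, Ω j → ℝ} (hY : Rem 𝓕 μ r k Y) (c : ℝ) :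
    Rem 𝓕 μ r k (fun j ω => c * Y j ω) := by
  obtain ⟨u, v, hu, hv, h⟩ := hY
  exact ⟨_, _, hu.const_mul c, hv.const_mul c, fun j ω => by simp only [h]; ring⟩

lemma Rem.mono {R : ℝ} (hr : ∀ j, 0 < r j ∧ r j ≤ R) {k l : ℕ} (hlk : l ≤ k)
    {Y : ∀ j, Ω j → ℝ} (hY : Rem 𝓕 μ r k Y) : Rem 𝓕 μ r l Y := by
  obtain ⟨u, v, hu, hv, h⟩ := hY
  exact ⟨u, v, hu.mono hr (by omega), hv.mono hr (by omega), h⟩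

end Fam

section OneStep

lemma young (s t : ℝ) (hs : 0 ≤ s) (ht : 0 ≤ t) (k l : ℕ) :
    s ^ k * t ^ l ≤ s ^ (k + l) + t ^ (k + l) := by
  rcases le_total s t with h | h
  · have : s ^ k * t ^ l ≤ t ^ k * t ^ l := by gcongr
    rw [pow_add t]
    have := pow_nonneg hs (k + l)
    linarith
  · have : s ^ k * t ^ l ≤ s ^ k * s ^ l := by gcongr
    rw [pow_add s]
    have := pow_nonneg ht (k + l)
    linarith

lemma binom_bound (n : ℕ) : ∃ C : ℝ, 0 ≤ C ∧ ∀ x a : ℝ,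
    |(x + a) ^ (n + 2) - x ^ (n + 2) - (n + 2 : ℕ) * x ^ (n + 1) * a|
      ≤ C * (|x| ^ n * |a| ^ 2 + |a| ^ (n + 2)) := by
  induction n with
  | zero =>
    refine ⟨1, by norm_num, fun x a => ?_⟩
    have : (x + a) ^ (0 + 2) - x ^ (0 + 2) - ((0 + 2 : ℕ) : ℝ) * x ^ (0 + 1) * a = a ^ 2 := by
      push_cast; ring
    rw [this, abs_pow]
    have : 0 ≤ |a| ^ 2 := by positivity
    simp only [pow_zero, zero_add, one_mul]
    linarith
  | succ n ih =>
    obtain ⟨C, hC, h⟩ := ih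
    refine ⟨(n + 2) + 3 * C, by positivity, fun x a => ?_⟩
    set E := (x + a) ^ (n + 2) - x ^ (n + 2) - (n + 2 : ℕ) * x ^ (n + 1) * a with hE
    have e1 : (x + a) ^ (n + 1 + 2) - x ^ (n + 1 + 2) - ((n + 1 + 2 : ℕ) : ℝ) * x ^ (n + 1 + 1) * a
        = (n + 2) * (x ^ (n + 1) * a ^ 2) + (x + a) * E := by
      rw [hE]; push_cast; ring
    rw [e1]
    have b1 : |((n : ℝ) + 2) * (x ^ (n + 1) * a ^ 2)| = (n + 2) * (|x| ^ (n + 1) * |a| ^ 2) := by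
      rw [abs_mul, abs_mul, abs_pow, abs_pow, abs_of_nonneg (by positivity : (0 : ℝ) ≤ n + 2)]
    have b2 : |(x + a) * E| ≤ (|x| + |a|) * (C * (|x| ^ n * |a| ^ 2 + |a| ^ (n + 2))) := by
      rw [abs_mul]
      gcongr
      · exact abs_add_le _ _
      · exact h x a
    have y1 : |x| * |a| ^ n ≤ |x| ^ (n + 1) + |a| ^ (n + 1) := by
      have := young |x| |a| (abs_nonneg _) (abs_nonneg _) 1 n
      rwa [pow_one, add_comm 1 n] at this
    have y2 : |x| ^ n * |a| ≤ |x| ^ (n + 1) + |a| ^ (n + 1) := by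
      have := young |x| |a| (abs_nonneg _) (abs_nonneg _) n 1
      rwa [pow_one] at this
    have z1 : |x| * |a| ^ (n + 2) ≤ |x| ^ (n + 1) * |a| ^ 2 + |a| ^ (n + 1 + 2) := by
      have := mul_le_mul_of_nonneg_right y1 (sq_nonneg |a|)
      calc _ = |x| * |a| ^ n * |a| ^ 2 := by ring
        _ ≤ _ := this
        _ = _ := by ring
    have z2 : |x| ^ n * |a| * |a| ^ 2 ≤ |x| ^ (n + 1) * |a| ^ 2 + |a| ^ (n + 1 + 2) := by
      have := mul_le_mul_of_nonneg_right y2 (sq_nonneg |a|)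
      calc _ ≤ _ := this
        _ = _ := by ring
    have e2 : (|x| + |a|) * (C * (|x| ^ n * |a| ^ 2 + |a| ^ (n + 2)))
        = C * (|x| ^ (n + 1) * |a| ^ 2 + |x| * |a| ^ (n + 2) + |x| ^ n * |a| * |a| ^ 2
          + |a| ^ (n + 1 + 2)) := by ring
    have p1 : 0 ≤ |a| ^ (n + 1 + 2) := by positivity
    calc _ ≤ _ := abs_add_le _ _
      _ ≤ (n + 2) * (|x| ^ (n + 1) * |a| ^ 2) + C * (|x| ^ (n + 1) * |a| ^ 2
          + |x| * |a| ^ (n + 2) + |x| ^ n * |a| * |a| ^ 2 + |a| ^ (n + 1 + 2)) := by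
            rw [b1, ← e2]; gcongr
      _ ≤ (n + 2) * (|x| ^ (n + 1) * |a| ^ 2) + C * (3 * (|x| ^ (n + 1) * |a| ^ 2
          + |a| ^ (n + 1 + 2))) := by gcongr; linarith
      _ ≤ _ := by
          have : 0 ≤ ((n : ℝ) + 2) * |a| ^ (n + 1 + 2) := by positivity
          linarith

lemma scalar_pt (n : ℕ) (hn : Even n) (R : ℝ) : ∃ C : ℝ, 0 ≤ C ∧ ∀ r x u v : ℝ, 0 < r → r ≤ R →
    |x + u + v| ^ (n + 2) ≤ |x| ^ (n + 2) + (n + 2 : ℕ) * (x ^ (n + 1) * v)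
      + C * r ^ 2 * (|x| ^ (n + 2) + |u / r ^ 2| ^ (n + 2) + |v / r| ^ (n + 2)) := by
  obtain ⟨C, hC, h⟩ := binom_bound n
  refine ⟨(n + 2) + C * (1 + (|R| ^ n + 1) * 2 ^ (n + 2) * (|R| ^ (n + 2) + 1)), by positivity, ?_⟩
  intro r x u v hr hrR
  have hR : 0 < R := hr.trans_le hrR
  have hev : Even (n + 2) := by rw [Nat.even_add]; simp [hn]
  rw [abs_of_pos hR, add_assoc x u v]
  set P := |x| ^ (n + 2)
  set U := |u / r ^ 2| ^ (n + 2)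
  set V := |v / r| ^ (n + 2)
  have hP : 0 ≤ P := by positivity
  have hU : 0 ≤ U := by positivity
  have hV : 0 ≤ V := by positivity
  have h1 := (abs_le.1 (h x (u + v))).2
  set a := u + v with ha
  set b := |a / r| with hb
  have hb0 : 0 ≤ b := abs_nonneg _
  have hab : |a| = r * b := by rw [hb, abs_div, abs_of_pos hr]; field_simp
  have h2 : |x| ^ n * |a| ^ 2 ≤ r ^ 2 * (P + b ^ (n + 2)) := by
    rw [hab]
    have := young |x| b (abs_nonneg _) hb0 n 2
    calc _ = r ^ 2 * (|x| ^ n * b ^ 2) := by ring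
      _ ≤ _ := by gcongr
  have h3 : |a| ^ (n + 2) ≤ r ^ 2 * (R ^ n * b ^ (n + 2)) := by
    rw [hab]
    calc _ = r ^ 2 * (r ^ n * b ^ (n + 2)) := by ring
      _ ≤ _ := by gcongr
  have h4 : b ^ (n + 2) ≤ 2 ^ (n + 2) * (R ^ (n + 2) * U + V) := by
    have e : a / r = r * (u / r ^ 2) + v / r := by rw [ha]; field_simp
    rw [hb, e]
    refine (abs_add_pow_le _ _ _).trans ?_
    rw [abs_mul, mul_pow, abs_of_pos hr]
    gcongr
  have h5 : x ^ (n + 1) * u ≤ r ^ 2 * (P + U) := by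
    have := young |x| |u / r ^ 2| (abs_nonneg _) (abs_nonneg _) (n + 1) 1
    have e : |x ^ (n + 1) * u| = r ^ 2 * (|x| ^ (n + 1) * |u / r ^ 2| ^ 1) := by
      rw [abs_mul, abs_pow, abs_div, abs_of_pos (by positivity : 0 < r ^ 2)]; field_simp
    calc _ ≤ _ := le_abs_self _
      _ = _ := e
      _ ≤ _ := by gcongr
  have h6 : |x + a| ^ (n + 2) = (x + a) ^ (n + 2) := hev.pow_abs _
  have h7 : P = x ^ (n + 2) := hev.pow_abs _
  have h8 : C * (|x| ^ n * |a| ^ 2 + |a| ^ (n + 2)) ≤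
      C * (r ^ 2 * (1 + (R ^ n + 1) * 2 ^ (n + 2) * (R ^ (n + 2) + 1)) * (P + U + V)) := by
    have i0 : 0 ≤ R ^ n := by positivity
    have i1 : 0 ≤ R ^ (n + 2) := by positivity
    have i3 : R ^ (n + 2) * U + V ≤ (R ^ (n + 2) + 1) * (P + U + V) := by nlinarith
    gcongr
    calc _ ≤ r ^ 2 * (P + (R ^ n + 1) * b ^ (n + 2)) := by linarith
      _ ≤ r ^ 2 * (P + (R ^ n + 1) * (2 ^ (n + 2) * ((R ^ (n + 2) + 1) * (P + U + V)))) := by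
          have := h4.trans (mul_le_mul_of_nonneg_left i3 (by positivity))
          gcongr
      _ ≤ r ^ 2 * ((P + U + V) + (R ^ n + 1) * (2 ^ (n + 2) * ((R ^ (n + 2) + 1) * (P + U + V)))) := by
          gcongr; linarith
      _ = _ := by ring
  have h9 : ((n : ℝ) + 2) * (x ^ (n + 1) * u) ≤ (n + 2) * (r ^ 2 * (P + U + V)) := by
    refine mul_le_mul_of_nonneg_left (h5.trans ?_) (by positivity)
    exact mul_le_mul_of_nonneg_left (by linarith) (by positivity)
  rw [h6]
  push_cast at h1 ⊢
  have e3 : ((n : ℝ) + 2) * x ^ (n + 1) * a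
    = (n + 2) * (x ^ (n + 1) * u) + (n + 2) * (x ^ (n + 1) * v) := by rw [ha]; ring
  nlinarith

lemma scalar_step (n : ℕ) (hn : Even n) (R c : ℝ) (hc : 0 ≤ c) : ∃ C : ℝ, 0 ≤ C ∧
    ∀ {Ω : Type} [MeasurableSpace Ω] (μ : Measure Ω) [IsProbabilityMeasure μ] (r A : ℝ)
      (x u v : Ω → ℝ), 0 < r → r ≤ R → AM μ x → AM μ u → AM μ v →
      ∫ ω, x ω ^ (n + 1) * v ω ∂μ = 0 → ∫ ω, |x ω| ^ (n + 2) ∂μ ≤ A →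
      ∫ ω, |u ω / r ^ 2| ^ (n + 2) ∂μ ≤ c * A → ∫ ω, |v ω / r| ^ (n + 2) ∂μ ≤ c * A →
      ∫ ω, |x ω + u ω + v ω| ^ (n + 2) ∂μ ≤ ∫ ω, |x ω| ^ (n + 2) ∂μ + C * r ^ 2 * A := by
  obtain ⟨C, hC, h⟩ := scalar_pt n hn R
  refine ⟨C * (1 + 2 * c), by positivity, ?_⟩
  intro Ω _ μ _ r A x u v hr hrR hx hu hv h0 hxA huA hvA
  have i1 := hx.2 (n + 2)
  have i2 := ((hx.pow (n + 1)).mul hv).integrable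
  have i3 : Integrable (fun ω => |u ω / r ^ 2| ^ (n + 2)) μ := (hu.div (r ^ 2)).2 (n + 2)
  have i4 : Integrable (fun ω => |v ω / r| ^ (n + 2)) μ := (hv.div r).2 (n + 2)
  have i5 : Integrable (fun ω => |x ω| ^ (n + 2) + |u ω / r ^ 2| ^ (n + 2)) μ := i1.add i3
  have i6 : Integrable (fun ω => C * r ^ 2 * (|x ω| ^ (n + 2) + |u ω / r ^ 2| ^ (n + 2)
    + |v ω / r| ^ (n + 2))) μ := (i5.add i4).const_mul _
  have i7 : Integrable (fun ω => (n + 2 : ℕ) * (x ω ^ (n + 1) * v ω)) μ := i2.const_mul _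
  have i8 : Integrable (fun ω => |x ω| ^ (n + 2) + (n + 2 : ℕ) * (x ω ^ (n + 1) * v ω)) μ :=
    i1.add i7
  have hI : ∫ ω, |x ω + u ω + v ω| ^ (n + 2) ∂μ ≤
      ∫ ω, (|x ω| ^ (n + 2) + (n + 2 : ℕ) * (x ω ^ (n + 1) * v ω)
      + C * r ^ 2 * (|x ω| ^ (n + 2) + |u ω / r ^ 2| ^ (n + 2) + |v ω / r| ^ (n + 2))) ∂μ :=
    integral_mono (((hx.add hu).add hv).2 (n + 2))
      (i8.add i6)
      (fun ω => h r _ _ _ hr hrR)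
  refine hI.trans ?_
  rw [integral_add i8 i6, integral_add i1 i7, integral_const_mul, integral_const_mul,
    integral_add i5 i4, integral_add i1 i3, h0]
  have : C * r ^ 2 * (∫ ω, |x ω| ^ (n + 2) ∂μ + ∫ ω, |u ω / r ^ 2| ^ (n + 2) ∂μ
      + ∫ ω, |v ω / r| ^ (n + 2) ∂μ) ≤ C * r ^ 2 * (A + c * A + c * A) := by gcongr
  linarith

lemma recur (S : ℕ → ℝ) (C τ ε T : ℝ) (M : ℕ) (hC : 0 ≤ C) (hτ : 0 ≤ τ) (hM : M * τ ≤ T)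
    (h0 : 0 ≤ S 0 + ε) (h : ∀ k < M, S (k + 1) ≤ S k + C * τ * (S k + ε)) :
    ∀ k ≤ M, S k + ε ≤ Real.exp (C * T) * (S 0 + ε) := by
  have key : ∀ k ≤ M, S k + ε ≤ Real.exp (C * τ * k) * (S 0 + ε) := by
    intro k
    induction k with
    | zero => simp
    | succ k ih =>
      intro hk
      have h1 := ih (by omega)
      have h2 := h k (by omega)
      have h3 : 1 + C * τ ≤ Real.exp (C * τ) := by linarith [Real.add_one_le_exp (C * τ)]
      have hCτ : 0 ≤ C * τ := by positivity
      calc S (k + 1) + ε ≤ (1 + C * τ) * (S k + ε) := by linarith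
        _ ≤ (1 + C * τ) * (Real.exp (C * τ * k) * (S 0 + ε)) := by gcongr
        _ ≤ Real.exp (C * τ) * (Real.exp (C * τ * k) * (S 0 + ε)) := by gcongr
        _ = _ := by rw [← mul_assoc, ← Real.exp_add]; push_cast; ring_nf
  intro k hk
  refine (key k hk).trans ?_
  gcongr ?_ * _
  apply Real.exp_le_exp.2
  rw [mul_assoc]
  have : τ * k ≤ T := by
    have : (k : ℝ) ≤ M := by exact_mod_cast hk
    nlinarith
  gcongr

lemma abs_sum_pow_le {κ : Type*} [Fintype κ] (p : ℕ) (y : κ → ℝ) :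
    |∑ k, y k| ^ (p + 1) ≤ (Fintype.card κ : ℝ) ^ p * (∑ k, |y k| ^ (p + 1)) := by
  have h1 : |∑ k, y k| ^ (p + 1) ≤ (∑ k, |y k|) ^ (p + 1) :=
    pow_le_pow_left₀ (abs_nonneg _) (Finset.abs_sum_le_sum_abs _ _) _
  have := pow_sum_le_card_mul_sum_pow (s := (Finset.univ : Finset κ)) (f := fun k => |y k|)
    (fun i _ => abs_nonneg _) p
  exact h1.trans this

lemma norm_pow_le_sum {d : ℕ} (p : ℕ) (x : Fin d → ℝ) : ‖x‖ ^ (p + 1) ≤ ∑ i, |x i| ^ (p + 1) := by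
  rcases isEmpty_or_nonempty (Fin d) with h | h
  · have : x = 0 := Subsingleton.elim _ _
    simp [this]
  · obtain ⟨i, hi⟩ := Finite.exists_max (fun i => |x i|)
    have h1 : ‖x‖ ≤ |x i| := (pi_norm_le_iff_of_nonneg (abs_nonneg _)).2 fun k => hi k
    refine (pow_le_pow_left₀ (norm_nonneg _) h1 _).trans ?_
    exact Finset.single_le_sum (f := fun i => |x i| ^ (p + 1)) (fun i _ => by positivity)
      (Finset.mem_univ i)

lemma AM.norm {d : ℕ} {Ω : Type} [MeasurableSpace Ω] {μ : Measure Ω} [IsFiniteMeasure μ]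
    {D : Ω → Fin d → ℝ} (hD : ∀ i, AM μ (fun ω => D ω i)) : AM μ (fun ω => ‖D ω‖) := by
  refine (AM.sum Finset.univ (fun i _ => (hD i).abs)).dom
    (measurable_pi_lambda _ (fun i => (hD i).1)).norm (fun ω => ?_)
  rw [abs_norm, abs_of_nonneg (Finset.sum_nonneg fun i _ => abs_nonneg _)]
  simpa using norm_pow_le_sum 0 (D ω)

lemma lin_bound {d : ℕ} (p : ℕ) {Ω : Type} [MeasurableSpace Ω] {μ : Measure Ω}
    [IsProbabilityMeasure μ] {D : Ω → Fin d → ℝ} {φ : Ω → ℝ} {L e : ℝ} (hL : 0 ≤ L) (he : 0 ≤ e)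
    (hD : ∀ i, AM μ (fun ω => D ω i)) (hφ : Measurable φ)
    (h : ∀ ω, |φ ω| ≤ L * (‖D ω‖ + e)) : AM μ φ ∧
    ∫ ω, |φ ω| ^ (p + 1) ∂μ
      ≤ (2 * L) ^ (p + 1) * (∑ i, ∫ ω, |D ω i| ^ (p + 1) ∂μ + e ^ (p + 1)) := by
  have hN := AM.norm hD
  have h1 : AM μ φ := ((AM.const L).mul (hN.add (AM.const e))).dom hφ
    (fun ω => (h ω).trans (le_abs_self _))
  refine ⟨h1, ?_⟩
  have iD : ∀ i ∈ Finset.univ, Integrable (fun ω => |D ω i| ^ (p + 1)) μ :=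
    fun i _ => (hD i).2 (p + 1)
  calc _ ≤ ∫ ω, (2 * L) ^ (p + 1) * (∑ i, |D ω i| ^ (p + 1) + e ^ (p + 1)) ∂μ := by
        refine integral_mono (h1.2 _) (((integrable_finsetSum _ iD).add
          (integrable_const _)).const_mul _) fun ω => ?_
        have h2 := abs_add_pow_le ‖D ω‖ e (p + 1)
        rw [abs_norm, abs_of_nonneg he, abs_of_nonneg (by positivity)] at h2
        have h3 := norm_pow_le_sum p (D ω)
        calc _ ≤ (L * (‖D ω‖ + e)) ^ (p + 1) := pow_le_pow_left₀ (abs_nonneg _) (h ω) _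
          _ = L ^ (p + 1) * (‖D ω‖ + e) ^ (p + 1) := mul_pow _ _ _
          _ ≤ L ^ (p + 1) * (2 ^ (p + 1) * (∑ i, |D ω i| ^ (p + 1) + e ^ (p + 1))) := by
              gcongr
              exact h2.trans (by gcongr)
          _ = _ := by rw [mul_pow]; ring
    _ = _ := by
        rw [integral_const_mul, integral_add (integrable_finsetSum _ iD) (integrable_const _),
          integral_finsetSum _ iD]
        simp

/-- the one-step inequality in vector form -/
lemma vstep (d : ℕ) (κ : Type) [Fintype κ] (n : ℕ) (hn : Even n) (R L K : ℝ) (hL : 0 ≤ L)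
    (hK : 0 ≤ K) : ∃ C : ℝ, 0 ≤ C ∧
    ∀ {Ω : Type} (𝓖 : MeasurableSpace Ω) (𝓗 : κ → MeasurableSpace Ω) [MeasurableSpace Ω]
      (μ : Measure Ω) [IsProbabilityMeasure μ]
      (r e : ℝ) (D D' : Ω → Fin d → ℝ) (φ : Fin d → Ω → ℝ) (γ : Fin d → κ → Ω → ℝ)
      (ξ : κ → Ω → ℝ) (u v : Fin d → Ω → ℝ), 0 < r → r ≤ R → 0 ≤ e →
      (∀ i, AM μ (fun ω => D ω i)) → (∀ i, Measurable (φ i)) → (∀ i k, Measurable (γ i k)) →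
      (∀ i ω, |φ i ω| ≤ L * (‖D ω‖ + e)) → (∀ i k ω, |γ i k ω| ≤ L * (‖D ω‖ + e)) →
      (∀ k, AM μ (ξ k)) → (∀ k, ∫ ω, ξ k ω ∂μ = 0) →
      (∀ k, ∫ ω, |ξ k ω / r| ^ (n + 2) ∂μ ≤ K) →
      (∀ i, Measurable[𝓖] (fun ω => D ω i)) → (∀ i k, Measurable[𝓖] (γ i k)) →
      (∀ k, Measurable[𝓗 k] (ξ k)) → (∀ k, Indep 𝓖 (𝓗 k) μ) →
      (∀ i, AM μ (u i)) → (∀ i, AM μ (v i)) →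
      (∀ i, ∫ ω, (D ω i) ^ (n + 1) * v i ω ∂μ = 0) →
      (∀ i, ∫ ω, |u i ω / r ^ 2| ^ (n + 2) ∂μ ≤ K * e ^ (n + 2)) →
      (∀ i, ∫ ω, |v i ω / r| ^ (n + 2) ∂μ ≤ K * e ^ (n + 2)) →
      (∀ i ω, D' ω i = D ω i + φ i ω * r ^ 2 + ∑ k, γ i k ω * ξ k ω + u i ω + v i ω) →
      ∑ i, ∫ ω, |D' ω i| ^ (n + 2) ∂μ ≤ ∑ i, ∫ ω, |D ω i| ^ (n + 2) ∂μ
        + C * r ^ 2 * (∑ i, ∫ ω, |D ω i| ^ (n + 2) ∂μ + e ^ (n + 2)) := by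
  set k0 : ℝ := ((Fintype.card κ : ℕ) : ℝ) with hk0
  have hk0' : 0 ≤ k0 := by positivity
  set c : ℝ := 2 ^ (n + 2) * ((2 * L) ^ (n + 2) + K
    + k0 ^ (n + 1) * (k0 * ((2 * L) ^ (n + 2) * K))) with hc
  obtain ⟨C, hC, h⟩ := scalar_step n hn R c (by positivity)
  refine ⟨d * C, by positivity, ?_⟩
  intro Ω 𝓖 𝓗 _ μ _ r e D D' φ γ ξ u v hr hrR he hD hφm hγm hφ hγ hξ hξ0 hξK hDG hγG hξH hind
    hu hv hv0 huK hvK hD'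
  set S := ∑ i, ∫ ω, |D ω i| ^ (n + 2) ∂μ with hS
  have hS0 : 0 ≤ S := Finset.sum_nonneg fun i _ => integral_nonneg fun ω => by positivity
  have hep : 0 ≤ e ^ (n + 2) := by positivity
  have hA0 : 0 ≤ S + e ^ (n + 2) := by positivity
  have key : ∀ i, ∫ ω, |D' ω i| ^ (n + 2) ∂μ ≤ ∫ ω, |D ω i| ^ (n + 2) ∂μ
      + C * r ^ 2 * (S + e ^ (n + 2)) := by
    intro i
    obtain ⟨hφA, hφI⟩ := lin_bound (n + 1) hL he hD (hφm i) (hφ i)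
    have hγA := fun k => (lin_bound (n + 1) hL he hD (hγm i k) (hγ i k)).1
    have hγI := fun k => (lin_bound (n + 1) hL he hD (hγm i k) (hγ i k)).2
    have hU : AM μ (fun ω => φ i ω * r ^ 2 + u i ω) := (hφA.mul (AM.const _)).add (hu i)
    have hG : AM μ (fun ω => ∑ k, γ i k ω * ξ k ω) :=
      AM.sum _ fun k _ => (hγA k).mul (hξ k)
    have hV : AM μ (fun ω => (∑ k, γ i k ω * ξ k ω) + v i ω) := hG.add (hv i)
    have e1 : ∀ ω, D' ω i = D ω i + (φ i ω * r ^ 2 + u i ω) + ((∑ k, γ i k ω * ξ k ω) + v i ω) :=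
      fun ω => by rw [hD']; ring
    simp only [e1]
    refine h μ r (S + e ^ (n + 2)) _ _ _ hr hrR (hD i) hU hV ?_ ?_ ?_ ?_
    · have hsum : ∀ k, ∫ ω, D ω i ^ (n + 1) * (γ i k ω * ξ k ω) ∂μ = 0 := by
        intro k
        have hm : Measurable[𝓖] (fun ω => D ω i ^ (n + 1) * γ i k ω) :=
          Measurable.mul (Measurable.pow_const (hDG i) _) (hγG i k)
        have hi : IndepFun (fun ω => D ω i ^ (n + 1) * γ i k ω) (ξ k) μ :=
          indep_of_indep_of_le_left (indep_of_indep_of_le_right (hind k) (hξH k).comap_le)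
            hm.comap_le
        have := hi.integral_mul_eq_mul_integral
          (((hD i).pow (n + 1)).mul (hγA k)).1.aestronglyMeasurable
          (hξ k).1.aestronglyMeasurable
        rw [hξ0 k, mul_zero] at this
        rw [← this]
        simp [mul_assoc]
      simp only [mul_add, Finset.mul_sum]
      have ii : ∀ k ∈ Finset.univ, Integrable (fun ω => D ω i ^ (n + 1) * (γ i k ω * ξ k ω)) μ :=
        fun k _ => (((hD i).pow (n + 1)).mul ((hγA k).mul (hξ k))).integrable
      rw [integral_add (integrable_finsetSum _ ii)
        (((hD i).pow (n + 1)).mul (hv i)).integrable, integral_finsetSum _ ii, hv0 i]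
      simp [hsum]
    · have : ∫ ω, |D ω i| ^ (n + 2) ∂μ ≤ S :=
        Finset.single_le_sum (f := fun i => ∫ ω, |D ω i| ^ (n + 2) ∂μ)
          (fun i _ => integral_nonneg fun ω => by positivity) (Finset.mem_univ i)
      linarith
    · have i1 := hφA.2 (n + 2)
      have i2 : Integrable (fun ω => |u i ω / r ^ 2| ^ (n + 2)) μ := ((hu i).div _).2 _
      calc _ ≤ ∫ ω, 2 ^ (n + 2) * (|φ i ω| ^ (n + 2) + |u i ω / r ^ 2| ^ (n + 2)) ∂μ := by
            refine integral_mono ((hU.div _).2 _) ((i1.add i2).const_mul _) fun ω => ?_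
            have : (φ i ω * r ^ 2 + u i ω) / r ^ 2 = φ i ω + u i ω / r ^ 2 := by field_simp
            simp only [this]
            exact abs_add_pow_le _ _ _
        _ = 2 ^ (n + 2) * (∫ ω, |φ i ω| ^ (n + 2) ∂μ + ∫ ω, |u i ω / r ^ 2| ^ (n + 2) ∂μ) := by
            rw [integral_const_mul, integral_add i1 i2]
        _ ≤ 2 ^ (n + 2) * ((2 * L) ^ (n + 2) * (S + e ^ (n + 2)) + K * (S + e ^ (n + 2))) := by
            gcongr
            exact (huK i).trans (by gcongr; linarith)
        _ ≤ _ := by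
            rw [hc, ← add_mul, ← mul_assoc]
            refine mul_le_mul_of_nonneg_right (mul_le_mul_of_nonneg_left ?_ (by positivity)) hA0
            have : 0 ≤ k0 ^ (n + 1) * (k0 * ((2 * L) ^ (n + 2) * K)) := by positivity
            linarith
    · have i1 : ∀ k ∈ Finset.univ, Integrable (fun ω => |γ i k ω * ξ k ω / r| ^ (n + 2)) μ :=
        fun k _ => (((hγA k).mul (hξ k)).div r).2 _
      have i1' : Integrable (fun ω => k0 ^ (n + 1) * ∑ k, |γ i k ω * ξ k ω / r| ^ (n + 2)) μ :=
        (integrable_finsetSum _ i1).const_mul _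
      have i2 : Integrable (fun ω => |v i ω / r| ^ (n + 2)) μ := ((hv i).div _).2 _
      have hk : ∀ k, ∫ ω, |γ i k ω * ξ k ω / r| ^ (n + 2) ∂μ
          ≤ (2 * L) ^ (n + 2) * K * (S + e ^ (n + 2)) := by
        intro k
        have hi : IndepFun (fun ω => |γ i k ω| ^ (n + 2)) (fun ω => |ξ k ω / r| ^ (n + 2)) μ := by
          have h0 : IndepFun (γ i k) (ξ k) μ := 
            indep_of_indep_of_le_left (indep_of_indep_of_le_right (hind k) (hξH k).comap_le)
            (hγG i k).comap_le
          exact h0.comp (φ := fun x => |x| ^ (n + 2)) (ψ := fun x => |x / r| ^ (n + 2))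
            (by fun_prop) (by fun_prop)
        have := hi.integral_mul_eq_mul_integral
          ((hγA k).2 (n + 2)).aestronglyMeasurable (((hξ k).div r).2 (n + 2)).aestronglyMeasurable
        calc _ = ∫ ω, |γ i k ω| ^ (n + 2) * |ξ k ω / r| ^ (n + 2) ∂μ := by
              simp only [mul_div_assoc, abs_mul, mul_pow]
          _ = (∫ ω, |γ i k ω| ^ (n + 2) ∂μ) * ∫ ω, |ξ k ω / r| ^ (n + 2) ∂μ := this
          _ ≤ ((2 * L) ^ (n + 2) * (S + e ^ (n + 2))) * K := by
              apply mul_le_mul (hγI k) (hξK k) (integral_nonneg fun ω => by positivity)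
              positivity
          _ = _ := by ring
      calc _ ≤ ∫ ω, 2 ^ (n + 2) * (k0 ^ (n + 1) * ∑ k, |γ i k ω * ξ k ω / r| ^ (n + 2)
              + |v i ω / r| ^ (n + 2)) ∂μ := by
            refine integral_mono ((hV.div _).2 _) ((i1'.add i2).const_mul _) fun ω => ?_
            simp only [add_div]
            refine (abs_add_pow_le _ _ _).trans ?_
            gcongr
            rw [Finset.sum_div]
            exact abs_sum_pow_le (n + 1) _
        _ = 2 ^ (n + 2) * (k0 ^ (n + 1) * ∑ k, ∫ ω, |γ i k ω * ξ k ω / r| ^ (n + 2) ∂μ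
              + ∫ ω, |v i ω / r| ^ (n + 2) ∂μ) := by
            rw [integral_const_mul, integral_add i1' i2, integral_const_mul,
              integral_finsetSum _ i1]
        _ ≤ 2 ^ (n + 2) * (k0 ^ (n + 1) * ∑ k : κ, ((2 * L) ^ (n + 2) * K * (S + e ^ (n + 2)))
              + K * (S + e ^ (n + 2))) := by
            gcongr with k
            · exact hk k
            · exact (hvK i).trans (by gcongr; linarith)
        _ = 2 ^ (n + 2) * (K + k0 ^ (n + 1) * (k0 * ((2 * L) ^ (n + 2) * K)))
              * (S + e ^ (n + 2)) := by
            rw [Finset.sum_const, Finset.card_univ, nsmul_eq_mul, ← hk0]; ring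
        _ ≤ _ := by
            rw [hc]
            refine mul_le_mul_of_nonneg_right (mul_le_mul_of_nonneg_left ?_ (by positivity)) hA0
            have : 0 ≤ (2 * L) ^ (n + 2) := by positivity
            linarith
  calc _ ≤ ∑ i, (∫ ω, |D ω i| ^ (n + 2) ∂μ + C * r ^ 2 * (S + e ^ (n + 2))) :=
        Finset.sum_le_sum fun i _ => key i
    _ = _ := by rw [Finset.sum_add_distrib, Finset.sum_const, Finset.card_univ, Fintype.card_fin,
        nsmul_eq_mul]; ring

end OneStep

section Coef
variable {d m : ℕ}

structure Nice (C : ℝ) (φ : (Fin d → ℝ) → ℝ) : Prop where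
  diff : Differentiable ℝ φ
  cd : Continuous (fderiv ℝ φ)
  lip : ∀ x y, |φ y - φ x| ≤ C * ‖y - x‖
  grow : ∀ x, |φ x| ≤ C * (1 + ‖x‖)
  d1 : ∀ x, ‖fderiv ℝ φ x‖ ≤ C
  d2 : ∀ x y, ‖fderiv ℝ φ y - fderiv ℝ φ x‖ ≤ C * ‖y - x‖
  tay : ∀ x y, |φ y - φ x - fderiv ℝ φ x (y - x)| ≤ C * ‖y - x‖ ^ 2

lemma Nice.mono {C C' : ℝ} (h : C ≤ C') {φ : (Fin d → ℝ) → ℝ} (hφ : Nice C φ) : Nice C' φ where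
  diff := hφ.diff
  cd := hφ.cd
  lip x y := (hφ.lip x y).trans (by gcongr)
  grow x := (hφ.grow x).trans (by gcongr)
  d1 x := (hφ.d1 x).trans h
  d2 x y := (hφ.d2 x y).trans (by gcongr)
  tay x y := (hφ.tay x y).trans (by gcongr)

lemma nice_of (C : ℝ) (φ : (Fin d → ℝ) → ℝ) (hφ : ContDiff ℝ 2 φ)
    (h1 : ∀ x, ‖iteratedFDeriv ℝ 1 φ x‖ ≤ C) (h2 : ∀ x, ‖iteratedFDeriv ℝ 2 φ x‖ ≤ C) :
    Nice (C + |φ 0|) φ := by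
  have hC : 0 ≤ C := (norm_nonneg _).trans (h1 0)
  have hd : Differentiable ℝ φ := hφ.differentiable (by norm_num)
  have hd1 : ContDiff ℝ 1 (fderiv ℝ φ) := hφ.fderiv_right (by norm_num)
  have hd2 : Differentiable ℝ (fderiv ℝ φ) := hd1.differentiable (by norm_num)
  have b1 : ∀ x, ‖fderiv ℝ φ x‖ ≤ C := fun x => by
    have := h1 x; rwa [norm_iteratedFDeriv_one] at this
  have b2 : ∀ x, ‖fderiv ℝ (fderiv ℝ φ) x‖ ≤ C := fun x => by
    have := h2 x
    rwa [← norm_iteratedFDeriv_fderiv, norm_iteratedFDeriv_one] at this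
  have lip : ∀ x y, |φ y - φ x| ≤ C * ‖y - x‖ := fun x y =>
    Convex.norm_image_sub_le_of_norm_fderiv_le (s := Set.univ) (fun x _ => hd x)
      (fun x _ => b1 x) convex_univ (Set.mem_univ _) (Set.mem_univ _)
  have lip2 : ∀ x y, ‖fderiv ℝ φ y - fderiv ℝ φ x‖ ≤ C * ‖y - x‖ := fun x y =>
    Convex.norm_image_sub_le_of_norm_fderiv_le (s := Set.univ) (fun x _ => hd2 x)
      (fun x _ => b2 x) convex_univ (Set.mem_univ _) (Set.mem_univ _)
  have tay : ∀ x y, |φ y - φ x - fderiv ℝ φ x (y - x)| ≤ C * ‖y - x‖ ^ 2 := fun x y => by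
    have := Convex.norm_image_sub_le_of_norm_fderiv_le' (𝕜 := ℝ) (s := segment ℝ x y) (f := φ)
      (φ := fderiv ℝ φ x) (C := C * ‖y - x‖) (fun z _ => hd z)
      (fun z hz => (lip2 x z).trans (by
        gcongr
        obtain ⟨t, ht, rfl⟩ := (segment_eq_image' ℝ x y ▸ hz :)
        simp only [add_sub_cancel_left, norm_smul, Real.norm_eq_abs]
        have : |t| ≤ 1 := abs_le.2 ⟨by linarith [ht.1], ht.2⟩
        nlinarith [norm_nonneg (y - x)]))
      (convex_segment x y) (left_mem_segment ℝ x y) (right_mem_segment ℝ x y)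
    calc _ ≤ _ := this
      _ = _ := by ring
  have h0 : 0 ≤ |φ 0| := abs_nonneg _
  refine ⟨hd, hd1.continuous, fun x y => (lip x y).trans (by gcongr; linarith), fun x => ?_,
    fun x => (b1 x).trans (by linarith), fun x y => (lip2 x y).trans (by gcongr; linarith),
    fun x y => (tay x y).trans (by gcongr; linarith)⟩
  have := lip 0 x
  rw [sub_zero] at this
  have h3 : |φ x| ≤ |φ x - φ 0| + |φ 0| := by
    have := abs_add_le (φ x - φ 0) (φ 0)
    rwa [sub_add_cancel] at this
  have : 0 ≤ |φ 0| * ‖x‖ := by positivity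
  nlinarith

lemma nice_comp {V : Type*} [NormedAddCommGroup V] [NormedSpace ℝ V] (F : (Fin d → ℝ) → V)
    (C : ℝ) (hF : ContDiff ℝ 2 F)
    (h1 : ∀ x, ‖fderiv ℝ F x‖ ≤ C) (h2 : ∀ x, ‖iteratedFDeriv ℝ 2 F x‖ ≤ C) (π : V →L[ℝ] ℝ) :
    ∃ C', Nice C' (fun x => π (F x)) := by
  have hC : 0 ≤ C := (norm_nonneg _).trans (h1 0)
  have hφ : ContDiff ℝ 2 (fun x => π (F x)) := π.contDiff.comp hF
  refine ⟨_, nice_of (‖π‖ * C) _ hφ (fun x => ?_) (fun x => ?_)⟩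
  · refine (π.norm_iteratedFDeriv_comp_left (N := 2) (n := 1) hF.contDiffAt (by norm_num)).trans ?_
    rw [norm_iteratedFDeriv_one]
    exact mul_le_mul_of_nonneg_left (h1 x) (norm_nonneg _)
  · refine (π.norm_iteratedFDeriv_comp_left (N := 2) (n := 2) hF.contDiffAt (by norm_num)).trans ?_
    exact mul_le_mul_of_nonneg_left (h2 x) (norm_nonneg _)

lemma nice_all (f : (Fin d → ℝ) → Fin d → ℝ) (g : (Fin d → ℝ) → Fin d → Fin m → ℝ)
    (hf : ContDiff ℝ 2 f) (hg : ContDiff ℝ 2 g) (Cfg : ℝ)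
    (hf1 : ∀ x, ‖fderiv ℝ f x‖ ≤ Cfg) (hf2 : ∀ x, ‖iteratedFDeriv ℝ 2 f x‖ ≤ Cfg)
    (hg1 : ∀ x, ‖fderiv ℝ g x‖ ≤ Cfg) (hg2 : ∀ x, ‖iteratedFDeriv ℝ 2 g x‖ ≤ Cfg) :
    ∃ C, 0 ≤ C ∧ (∀ i, Nice C (fun x => f x i)) ∧ (∀ i j, Nice C (fun x => g x i j)) := by
  have a1 : ∀ i, ∃ C, Nice C (fun x => f x i) := fun i =>
    nice_comp f Cfg hf hf1 hf2 (ContinuousLinearMap.proj i)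
  have a2 : ∀ i j, ∃ C, Nice C (fun x => g x i j) := fun i j =>
    nice_comp g Cfg hg hg1 hg2 ((ContinuousLinearMap.proj (R := ℝ) (φ := fun _ : Fin m => ℝ) j).comp
      (ContinuousLinearMap.proj (R := ℝ) (φ := fun _ : Fin d => Fin m → ℝ) i))
  choose C1 h1 using a1
  choose C2 h2 using a2
  refine ⟨∑ i, |C1 i| + ∑ i, ∑ j, |C2 i j|, by positivity, fun i => (h1 i).mono ?_,
    fun i j => (h2 i j).mono ?_⟩
  · have := Finset.single_le_sum (f := fun i => |C1 i|) (fun i _ => abs_nonneg _)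
      (Finset.mem_univ i)
    have h' : 0 ≤ ∑ i, ∑ j, |C2 i j| := by positivity
    linarith [le_abs_self (C1 i)]
  · have e1 := Finset.single_le_sum (f := fun j => |C2 i j|) (fun i _ => abs_nonneg _)
      (Finset.mem_univ j)
    have e2 := Finset.single_le_sum (f := fun i => ∑ j, |C2 i j|) (fun i _ => by positivity)
      (Finset.mem_univ i)
    have h' : 0 ≤ ∑ i, |C1 i| := by positivity
    linarith [le_abs_self (C2 i j)]

variable {g : (Fin d → ℝ) → Fin d → Fin m → ℝ} {C : ℝ}

lemma milsteinH_eq (x : Fin d → ℝ) (i : Fin d) (j k : Fin m) :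
    milsteinH g x i j k = 1 / 2 * fderiv ℝ (fun y => g y i k) x (fun l => g x l j) := by
  unfold milsteinH
  congr 1
  have : (fun l => g x l j) = ∑ l : Fin d, g x l j • (Pi.single l 1 : Fin d → ℝ) := by
    ext l
    simp [Finset.sum_apply, Pi.single_apply]
  rw [this, map_sum]
  simp

lemma col_bound (hC : 0 ≤ C) (hg : ∀ i j, Nice C (fun x => g x i j)) (x : Fin d → ℝ) (j : Fin m) :
    ‖(fun l => g x l j : Fin d → ℝ)‖ ≤ C * (1 + ‖x‖) :=
  (pi_norm_le_iff_of_nonneg (by positivity)).2 fun l => (hg l j).grow x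

lemma H_grow (hC : 0 ≤ C) (hg : ∀ i j, Nice C (fun x => g x i j)) (x : Fin d → ℝ) (i : Fin d)
    (j k : Fin m) : |milsteinH g x i j k| ≤ C ^ 2 * (1 + ‖x‖) := by
  rw [milsteinH_eq, abs_mul]
  have h1 := (fderiv ℝ (fun y => g y i k) x).le_opNorm (fun l => g x l j)
  rw [Real.norm_eq_abs] at h1
  have h2 : ‖fderiv ℝ (fun y => g y i k) x‖ * ‖(fun l => g x l j : Fin d → ℝ)‖
      ≤ C * (C * (1 + ‖x‖)) := mul_le_mul ((hg i k).d1 x) (col_bound hC hg x j) (norm_nonneg _) hC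
  rw [abs_of_pos (by norm_num : (0 : ℝ) < 1 / 2)]
  have : 0 ≤ C * (C * (1 + ‖x‖)) := by positivity
  nlinarith

lemma H_lip (hC : 0 ≤ C) (hg : ∀ i j, Nice C (fun x => g x i j)) (x y : Fin d → ℝ) (i : Fin d)
    (j k : Fin m) : |milsteinH g y i j k - milsteinH g x i j k|
      ≤ C ^ 2 * ((2 + ‖x‖) * ‖y - x‖) := by
  rw [milsteinH_eq, milsteinH_eq, ← mul_sub, abs_mul]
  set A := fderiv ℝ (fun y => g y i k) x
  set B := fderiv ℝ (fun y => g y i k) y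
  have e : B (fun l => g y l j) - A (fun l => g x l j)
      = B ((fun l => g y l j) - (fun l => g x l j)) + (B - A) (fun l => g x l j) := by
    simp only [map_sub, _root_.sub_apply]; ring
  have hcol : ‖(fun l => g y l j : Fin d → ℝ) - (fun l => g x l j)‖ ≤ C * ‖y - x‖ :=
    (pi_norm_le_iff_of_nonneg (by positivity)).2 fun l => (hg l j).lip x y
  have h1 : |B ((fun l => g y l j) - (fun l => g x l j))| ≤ C * (C * ‖y - x‖) :=
    (B.le_opNorm _).trans (mul_le_mul ((hg i k).d1 y) hcol (norm_nonneg _) hC)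
  have h2 : |(B - A) (fun l => g x l j)| ≤ C * ‖y - x‖ * (C * (1 + ‖x‖)) :=
    ((B - A).le_opNorm _).trans (mul_le_mul ((hg i k).d2 x y) (col_bound hC hg x j)
      (norm_nonneg _) (by positivity))
  rw [e, abs_of_pos (by norm_num : (0 : ℝ) < 1 / 2)]
  have h3 := abs_add_le (B ((fun l => g y l j) - (fun l => g x l j))) ((B - A) (fun l => g x l j))
  have : 0 ≤ C ^ 2 * ((2 + ‖x‖) * ‖y - x‖) := by positivity
  nlinarith

lemma H_cont (hg : ∀ i j, Nice C (fun x => g x i j)) (i : Fin d) (j k : Fin m) :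
    Continuous (fun x => milsteinH g x i j k) := by
  unfold milsteinH
  have h1 : ∀ l, Continuous (fun x => g x l j) := fun l => (hg l j).diff.continuous
  have h2 : Continuous (fderiv ℝ (fun y => g y i k)) := (hg i k).cd
  fun_prop

/-- midpoint bound -/
lemma Nice.mid {φ : (Fin d → ℝ) → ℝ} (hφ : Nice C φ) (x y : Fin d → ℝ) (z : Fin d → ℝ)
    (hz : ∀ i, z i = 1 / 2 * (x i + y i)) :
    |1 / 2 * (φ x + φ y) - φ z| ≤ C * ‖x - y‖ ^ 2 := by
  have hC : 0 ≤ C := (norm_nonneg _).trans (hφ.d1 0)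
  have h1 := hφ.tay z x
  have h2 := hφ.tay z y
  have e1 : x - z = (1 / 2 : ℝ) • (x - y) := by ext i; simp [hz]; ring
  have e2 : y - z = -((1 / 2 : ℝ) • (x - y)) := by ext i; simp [hz]; ring
  have n1 : ‖(1 / 2 : ℝ) • (x - y)‖ = 1 / 2 * ‖x - y‖ := by rw [norm_smul]; norm_num
  rw [e1, n1] at h1
  rw [e2, norm_neg, n1, map_neg] at h2
  set a := fderiv ℝ φ z ((1 / 2 : ℝ) • (x - y))
  have : 0 ≤ C * ‖x - y‖ ^ 2 := by positivity
  rw [abs_le] at *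
  constructor <;> nlinarith

end Coef

section Expansion
variable {J : Type 1} {Ω : J → Type} {𝓕 𝓗 : ∀ j, MeasurableSpace (Ω j)}
  {𝓐 𝓑 : Bool → ∀ j, MeasurableSpace (Ω j)} [∀ j, MeasurableSpace (Ω j)] {μ : ∀ j, Measure (Ω j)}
  {r : J → ℝ} [∀ j, IsProbabilityMeasure (μ j)] {d m : ℕ}
  {f : (Fin d → ℝ) → Fin d → ℝ} {g : (Fin d → ℝ) → Fin d → Fin m → ℝ} {C R : ℝ}

lemma OL.meas {k : ℕ} {x : ∀ j, Ω j → Fin d → ℝ} (hx : ∀ i, OL μ r k (fun j ω => x j ω i)) (j : J) :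
    Measurable (x j) := measurable_pi_lambda _ fun i => ((hx i).1 j).1

lemma OL.norm {k : ℕ} {x : ∀ j, Ω j → Fin d → ℝ} (hx : ∀ i, OL μ r k (fun j ω => x j ω i)) :
    OL μ r k (fun j ω => ‖x j ω‖) := by
  refine (OL.sum Finset.univ (fun i _ => (hx i).abs)).dom
    (fun j => (OL.meas hx j).norm) (fun j ω => ?_)
  rw [abs_norm, abs_of_nonneg (Finset.sum_nonneg fun i _ => abs_nonneg _)]
  simpa using norm_pow_le_sum 0 (x j ω)

lemma OL.comp_nice {φ : (Fin d → ℝ) → ℝ} (hφ : Nice C φ) {x : ∀ j, Ω j → Fin d → ℝ}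
    (hx : ∀ i, OL μ r 0 (fun j ω => x j ω i)) : OL μ r 0 (fun j ω => φ (x j ω)) := by
  refine (((OL.const 1).add (OL.norm hx)).const_mul C).dom
    (fun j => hφ.diff.continuous.measurable.comp (OL.meas hx j)) (fun j ω => ?_)
  exact (hφ.grow _).trans (le_abs_self _)

lemma OL.comp_H (hC : 0 ≤ C) (hg : ∀ i j, Nice C (fun x => g x i j)) {x : ∀ j, Ω j → Fin d → ℝ}
    (hx : ∀ i, OL μ r 0 (fun j ω => x j ω i)) (i : Fin d) (k l : Fin m) :
    OL μ r 0 (fun j ω => milsteinH g (x j ω) i k l) := by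
  refine (((OL.const 1).add (OL.norm hx)).const_mul (C ^ 2)).dom
    (fun j => (H_cont hg i k l).measurable.comp (OL.meas hx j)) (fun j ω => ?_)
  exact (H_grow hC hg _ _ _ _).trans (le_abs_self _)

lemma OL.lip_nice {φ : (Fin d → ℝ) → ℝ} (hφ : Nice C φ) {k : ℕ} {x y : ∀ j, Ω j → Fin d → ℝ}
    (hx : ∀ i, OL μ r 0 (fun j ω => x j ω i)) (hy : ∀ i, OL μ r 0 (fun j ω => y j ω i))
    (hxy : ∀ i, OL μ r k (fun j ω => y j ω i - x j ω i)) :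
    OL μ r k (fun j ω => φ (y j ω) - φ (x j ω)) := by
  have hxy' : ∀ i, OL μ r k (fun j ω => (y j ω - x j ω) i) := hxy
  refine ((OL.norm hxy').const_mul C).dom
    (fun j => (hφ.diff.continuous.measurable.comp (OL.meas hy j)).sub
      (hφ.diff.continuous.measurable.comp (OL.meas hx j))) (fun j ω => ?_)
  exact (hφ.lip _ _).trans (le_abs_self _)

lemma OL.lip_H (hC : 0 ≤ C) (hg : ∀ i j, Nice C (fun x => g x i j)) {q : ℕ}
    {x y : ∀ j, Ω j → Fin d → ℝ}
    (hx : ∀ i, OL μ r 0 (fun j ω => x j ω i)) (hy : ∀ i, OL μ r 0 (fun j ω => y j ω i))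
    (hxy : ∀ i, OL μ r q (fun j ω => y j ω i - x j ω i)) (i : Fin d) (k l : Fin m) :
    OL μ r q (fun j ω => milsteinH g (y j ω) i k l - milsteinH g (x j ω) i k l) := by
  have hxy' : ∀ i, OL μ r q (fun j ω => (y j ω - x j ω) i) := hxy
  have h1 := (((OL.const 2).add (OL.norm hx)).mul (OL.norm hxy')).const_mul (C ^ 2)
  rw [zero_add] at h1
  refine h1.dom
    (fun j => ((H_cont hg i k l).measurable.comp (OL.meas hy j)).sub
      ((H_cont hg i k l).measurable.comp (OL.meas hx j))) (fun j ω => ?_)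
  exact (H_lip hC hg _ _ _ _ _).trans (le_abs_self _)

/-- All the facts about one coarse step used in the expansions. -/
structure Setup (f : (Fin d → ℝ) → Fin d → ℝ) (g : (Fin d → ℝ) → Fin d → Fin m → ℝ) (R : ℝ)
    (𝓕 𝓗 : ∀ j, MeasurableSpace (Ω j)) (𝓐 𝓑 : Bool → ∀ j, MeasurableSpace (Ω j))
    [∀ j, MeasurableSpace (Ω j)] (μ : ∀ j, Measure (Ω j)) (r : J → ℝ)
    (w : Bool → ∀ j, Ω j → Fin m → ℝ) (x y z : Bool → ∀ j, Ω j → Fin d → ℝ)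
    (xc zc : ∀ j, Ω j → Fin d → ℝ) : Prop where
  hr : ∀ j, 0 < r j ∧ r j ≤ R
  hFA : ∀ β j, 𝓕 j ≤ 𝓐 β j
  indA : ∀ β j, Indep (𝓐 β j) (𝓑 (!β) j) (μ j)
  indF : ∀ j, Indep (𝓕 j) (𝓗 j) (μ j)
  wH : ∀ β j k, Measurable[𝓗 j] (fun ω => w β j ω k)
  wB : ∀ β j k, Measurable[𝓑 β j] (fun ω => w β j ω k)
  wA : ∀ β j k, Measurable[𝓐 β j] (fun ω => w β j ω k)
  xF : ∀ β j, Measurable[𝓕 j] (x β j)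
  yA : ∀ β j, Measurable[𝓐 β j] (y β j)
  xcF : ∀ j, Measurable[𝓕 j] (xc j)
  x0 : ∀ β i, OL μ r 0 (fun j ω => x β j ω i)
  y0 : ∀ β i, OL μ r 0 (fun j ω => y β j ω i)
  xc0 : ∀ i, OL μ r 0 (fun j ω => xc j ω i)
  w1 : ∀ β k, OL μ r 1 (fun j ω => w β j ω k)
  mean1 : ∀ β j k, ∫ ω, w β j ω k ∂(μ j) = 0
  mean2 : ∀ β j k l, ∫ ω, (w β j ω k * w β j ω l - if k = l then r j ^ 2 / 2 else 0) ∂(μ j) = 0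
  mean3 : ∀ β j k l, ∫ ω, w β j ω k * w (!β) j ω l ∂(μ j) = 0
  ystep : ∀ β j ω, y β j ω = milsteinStep f g (r j ^ 2 / 2) (x β j ω) (w β j ω)
  zstep : ∀ β j ω, z β j ω = milsteinStep f g (r j ^ 2 / 2) (y β j ω) (w (!β) j ω)
  zcstep : ∀ j ω, zc j ω = milsteinStep f g (r j ^ 2) (xc j ω) (w false j ω + w true j ω)

variable {w : Bool → ∀ j, Ω j → Fin m → ℝ} {x y z : Bool → ∀ j, Ω j → Fin d → ℝ}
    {xc zc : ∀ j, Ω j → Fin d → ℝ}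

lemma OL.rsq (hr : ∀ j, 0 < r j ∧ r j ≤ R) (c : ℝ) : OL μ r 2 (fun j _ => r j ^ 2 * c) :=
  OL.det (K := |c|) fun j => by
    have := (hr j).1
    rw [mul_div_assoc, mul_div_left_comm, div_self (by positivity), mul_one]

lemma ww_OL (hr : ∀ j, 0 < r j ∧ r j ≤ R) {w : ∀ j, Ω j → Fin m → ℝ}
    (w1 : ∀ k, OL μ r 1 (fun j ω => w j ω k)) (c : ℝ) (k l : Fin m) :
    OL μ r 2 (fun j ω => w j ω k * w j ω l - if k = l then r j ^ 2 * c else 0) := by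
  refine ((w1 k).mul (w1 l)).sub ?_
  split_ifs
  · exact OL.rsq hr c
  · exact OL.zero


lemma Setup.ww (S : Setup f g R 𝓕 𝓗 𝓐 𝓑 μ r w x y z xc zc)
    (β : Bool) (k l : Fin m) :
    OL μ r 2 (fun j ω => w β j ω k * w β j ω l - if k = l then r j ^ 2 / 2 else 0) := by
  simpa [div_eq_mul_inv] using ww_OL S.hr (S.w1 β) (2⁻¹) k l

/-- `y - x - g(x) a = O(r^2)` -/
lemma Setup.e2 (hC : 0 ≤ C)
    (hf : ∀ i, Nice C (fun x => f x i))
    (hg : ∀ i j, Nice C (fun x => g x i j))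
    (S : Setup f g R 𝓕 𝓗 𝓐 𝓑 μ r w x y z xc zc)
    (β : Bool) (i : Fin d) :
    OL μ r 2 (fun j ω => y β j ω i - x β j ω i - ∑ k, g (x β j ω) i k * w β j ω k) := by
  have h1 : OL μ r (0 + 2) (fun j ω => f (x β j ω) i * (r j ^ 2 * 2⁻¹)) :=
    (OL.comp_nice (hf i) (S.x0 β)).mul (OL.rsq S.hr _)
  have h2 : OL μ r (0 + 2) (fun j ω => ∑ k, ∑ l, milsteinH g (x β j ω) i k l *
      (w β j ω k * w β j ω l - if k = l then r j ^ 2 / 2 else 0)) :=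
    OL.sum _ fun k _ => OL.sum _ fun l _ => (OL.comp_H hC hg (S.x0 β) i k l).mul (S.ww β k l)
  refine (h1.add h2).congr fun j ω => ?_
  rw [S.ystep]
  simp only [milsteinStep]
  ring

lemma Setup.e1 (hC : 0 ≤ C)
    (hf : ∀ i, Nice C (fun x => f x i))
    (hg : ∀ i j, Nice C (fun x => g x i j))
    (S : Setup f g R 𝓕 𝓗 𝓐 𝓑 μ r w x y z xc zc)
    (β : Bool) (i : Fin d) :
    OL μ r 1 (fun j ω => y β j ω i - x β j ω i) := by
  have h1 : OL μ r (0 + 1) (fun j ω => ∑ k, g (x β j ω) i k * w β j ω k) :=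
    OL.sum _ fun k _ => (OL.comp_nice (hg i k) (S.x0 β)).mul (S.w1 β k)
  exact (((S.e2 hC hf hg β i).mono S.hr (by norm_num : 1 ≤ 2)).add h1).congr fun j ω => by ring

lemma fderiv_meas {φ : (Fin d → ℝ) → ℝ} (hφ : Nice C φ)
    (hg : ∀ i j, Nice C (fun x => g x i j)) (k : Fin m) :
    Measurable (fun x : Fin d → ℝ => fderiv ℝ φ x (fun l => g x l k)) := by
  have h1 : ∀ l, Continuous (fun x => g x l k) := fun l => (hg l k).diff.continuous
  have h2 : Continuous (fderiv ℝ φ) := hφ.cd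
  have : Continuous (fun x : Fin d → ℝ => (fun l => g x l k : Fin d → ℝ)) := continuous_pi h1
  exact (h2.clm_apply this).measurable

lemma Setup.fd_OL (hC : 0 ≤ C)
    (hg : ∀ i j, Nice C (fun x => g x i j))
    (S : Setup f g R 𝓕 𝓗 𝓐 𝓑 μ r w x y z xc zc)
    {φ : (Fin d → ℝ) → ℝ} (hφ : Nice C φ) (β : Bool) (k : Fin m) :
    OL μ r 0 (fun j ω => fderiv ℝ φ (x β j ω) (fun l => g (x β j ω) l k)) := by
  refine (((OL.const 1).add (OL.norm (S.x0 β))).const_mul (C * C)).dom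
    (fun j => (fderiv_meas hφ hg k).comp (OL.meas (S.x0 β) j)) fun j ω => ?_
  refine ((ContinuousLinearMap.le_opNorm _ _).trans (mul_le_mul (hφ.d1 _)
    (col_bound hC hg _ k) (norm_nonneg _) hC)).trans ?_
  rw [← mul_assoc]
  exact le_abs_self _

/-- `φ(y) - φ(x) - Dφ(x) g(x) a = O(r^2)` -/
lemma Setup.tay (hC : 0 ≤ C)
    (hf : ∀ i, Nice C (fun x => f x i))
    (hg : ∀ i j, Nice C (fun x => g x i j))
    (S : Setup f g R 𝓕 𝓗 𝓐 𝓑 μ r w x y z xc zc)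
    {φ : (Fin d → ℝ) → ℝ} (hφ : Nice C φ) (β : Bool) :
    OL μ r 2 (fun j ω => φ (y β j ω) - φ (x β j ω)
      - ∑ k, fderiv ℝ φ (x β j ω) (fun l => g (x β j ω) l k) * w β j ω k) := by
  have hE : ∀ i, OL μ r 2 (fun j ω => (fun i => y β j ω i - x β j ω i
      - ∑ k, g (x β j ω) i k * w β j ω k : Fin d → ℝ) i) := S.e2 hC hf hg β
  have hD : ∀ i, OL μ r 1 (fun j ω => (y β j ω - x β j ω) i) := S.e1 hC hf hg β
  have hm : ∀ j, Measurable (fun ω => φ (y β j ω) - φ (x β j ω)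
      - ∑ k, fderiv ℝ φ (x β j ω) (fun l => g (x β j ω) l k) * w β j ω k) := by
    intro j
    refine ((hφ.diff.continuous.measurable.comp (OL.meas (S.y0 β) j)).sub
      (hφ.diff.continuous.measurable.comp (OL.meas (S.x0 β) j))).sub
      (Finset.measurable_sum _ fun k _ => ?_)
    exact ((S.fd_OL hC hg hφ β k).1 j).1.mul ((S.w1 β k).1 j).1
  refine ((((OL.norm hD).mul (OL.norm hD)).const_mul C).add
    ((OL.norm hE).const_mul C)).dom hm fun j ω => ?_
  refine le_trans ?_ (le_abs_self _)
  set A := fderiv ℝ φ (x β j ω) with hA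
  have e : φ (y β j ω) - φ (x β j ω) - ∑ k, A (fun l => g (x β j ω) l k) * w β j ω k
      = (φ (y β j ω) - φ (x β j ω) - A (y β j ω - x β j ω))
        + A (fun i => y β j ω i - x β j ω i - ∑ k, g (x β j ω) i k * w β j ω k) := by
    have : (fun i => y β j ω i - x β j ω i - ∑ k, g (x β j ω) i k * w β j ω k)
        = (y β j ω - x β j ω) - ∑ k, w β j ω k • (fun l => g (x β j ω) l k : Fin d → ℝ) := by
      ext i
      simp [Finset.sum_apply, mul_comm]
    rw [this]
    simp only [map_sub, map_sum, map_smul, smul_eq_mul, mul_comm]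
    ring
  rw [e]
  refine (abs_add_le _ _).trans (add_le_add ?_ ?_)
  · refine (hφ.tay _ _).trans_eq (by ring)
  · exact (A.le_opNorm _).trans (mul_le_mul_of_nonneg_right (hφ.d1 _) (norm_nonneg _))

lemma Setup.expansion (hC : 0 ≤ C)
    (hf : ∀ i, Nice C (fun x => f x i))
    (hg : ∀ i j, Nice C (fun x => g x i j))
    (S : Setup f g R 𝓕 𝓗 𝓐 𝓑 μ r w x y z xc zc)
    (β : Bool) (i : Fin d) :
    Rem 𝓕 μ r 2 (fun j ω => z β j ω i - x β j ω i - f (x β j ω) i * r j ^ 2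
      - ∑ k, g (x β j ω) i k * (w β j ω k + w (!β) j ω k)
      - ∑ k, ∑ l, milsteinH g (x β j ω) i k l * ((w β j ω k + w (!β) j ω k)
          * (w β j ω l + w (!β) j ω l) - if k = l then r j ^ 2 else 0)
      - ∑ k, ∑ l, milsteinH g (x β j ω) i k l * (w β j ω k * w (!β) j ω l
          - w (!β) j ω k * w β j ω l)) := by
  have t1 : OL μ r (2 + 2) (fun j ω => (f (y β j ω) i - f (x β j ω) i
      - ∑ k, fderiv ℝ (fun x => f x i) (x β j ω) (fun l => g (x β j ω) l k) * w β j ω k)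
      * (r j ^ 2 * 2⁻¹)) := (S.tay hC hf hg (hf i) β).mul (OL.rsq S.hr _)
  have t2 : Mart 𝓕 μ r (0 + 2 + 1) (fun j ω => ∑ k, (fderiv ℝ (fun x => f x i) (x β j ω)
      (fun l => g (x β j ω) l k) * (r j ^ 2 * 2⁻¹)) * w β j ω k) := by
    refine Mart.sum _ fun k _ => Mart.of_mul (𝓖 := 𝓕) (𝓗 := 𝓗)
      ((S.fd_OL hC hg (hf i) β k).mul (OL.rsq S.hr _)) (S.w1 β k) (fun _ => le_rfl)
      (fun j => ?_) (fun j => S.wH β j k) S.indF (fun j => S.mean1 β j k)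
    exact Measurable.mul_const ((fderiv_meas (hf i) hg k).comp (S.xF β j)) _
  have hgm : ∀ k, Measurable (fun x => g x i k) := fun k => (hg i k).diff.continuous.measurable
  have t3 : Mart 𝓕 μ r (2 + 1) (fun j ω => ∑ k, (g (y β j ω) i k - g (x β j ω) i k
      - ∑ l, fderiv ℝ (fun x => g x i k) (x β j ω) (fun q => g (x β j ω) q l) * w β j ω l)
      * w (!β) j ω k) := by
    refine Mart.sum _ fun k _ => Mart.of_mul (𝓖 := 𝓐 β) (𝓗 := 𝓑 (!β))
      (S.tay hC hf hg (hg i k) β) (S.w1 (!β) k) (S.hFA β)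
      (fun j => ?_) (fun j => S.wB (!β) j k) (S.indA β) (fun j => S.mean1 (!β) j k)
    have hxA : Measurable[𝓐 β j] (x β j) := (S.xF β j).mono (S.hFA β j) le_rfl
    refine Measurable.sub (Measurable.sub ((hgm k).comp (S.yA β j)) ((hgm k).comp hxA))
      (Finset.measurable_sum _ fun l _ => Measurable.mul ((fderiv_meas (hg i k) hg l).comp hxA)
        (S.wA β j l))
  have hHm : ∀ k l, Measurable (fun x => milsteinH g x i k l) :=
    fun k l => (H_cont hg i k l).measurable
  have t4 : Mart 𝓕 μ r (1 + 2) (fun j ω => ∑ k, ∑ l,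
      (milsteinH g (y β j ω) i k l - milsteinH g (x β j ω) i k l)
      * (w (!β) j ω k * w (!β) j ω l - if k = l then r j ^ 2 / 2 else 0)) := by
    refine Mart.sum _ fun k _ => Mart.sum _ fun l _ => Mart.of_mul (𝓖 := 𝓐 β) (𝓗 := 𝓑 (!β))
      (OL.lip_H hC hg (S.x0 β) (S.y0 β) (S.e1 hC hf hg β) i k l) (S.ww (!β) k l) (S.hFA β)
      (fun j => ?_) (fun j => ?_) (S.indA β) (fun j => S.mean2 (!β) j k l)
    · have hxA : Measurable[𝓐 β j] (x β j) := (S.xF β j).mono (S.hFA β j) le_rfl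
      exact Measurable.sub ((hHm k l).comp (S.yA β j)) ((hHm k l).comp hxA)
    · exact Measurable.sub_const (Measurable.mul (S.wB (!β) j k) (S.wB (!β) j l)) _
  refine ((Rem.of_OL t1).add ((Rem.of_Mart t2).add ((Rem.of_Mart t3).add (Rem.of_Mart t4)))).congr
    fun j ω => ?_
  have hz : z β j ω i = y β j ω i + f (y β j ω) i * (r j ^ 2 / 2)
      + (∑ k, g (y β j ω) i k * w (!β) j ω k) + ∑ k, ∑ l, milsteinH g (y β j ω) i k l
        * (w (!β) j ω k * w (!β) j ω l - if k = l then r j ^ 2 / 2 else 0) := by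
    rw [S.zstep]; rfl
  have hy : y β j ω i = x β j ω i + f (x β j ω) i * (r j ^ 2 / 2)
      + (∑ k, g (x β j ω) i k * w β j ω k) + ∑ k, ∑ l, milsteinH g (x β j ω) i k l
        * (w β j ω k * w β j ω l - if k = l then r j ^ 2 / 2 else 0) := by
    rw [S.ystep]; rfl
  have S1 : ∑ k, ∑ l, milsteinH g (x β j ω) i k l * ((w β j ω k + w (!β) j ω k)
          * (w β j ω l + w (!β) j ω l) - if k = l then r j ^ 2 else 0)
      + ∑ k, ∑ l, milsteinH g (x β j ω) i k l * (w β j ω k * w (!β) j ω l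
          - w (!β) j ω k * w β j ω l)
      = ∑ k, ∑ l, milsteinH g (x β j ω) i k l
        * (w β j ω k * w β j ω l - if k = l then r j ^ 2 / 2 else 0)
      + ∑ k, ∑ l, milsteinH g (x β j ω) i k l
        * (w (!β) j ω k * w (!β) j ω l - if k = l then r j ^ 2 / 2 else 0)
      + ∑ l, ∑ k, fderiv ℝ (fun x => g x i l) (x β j ω) (fun q => g (x β j ω) q k) * w β j ω k
        * w (!β) j ω l := by
    rw [Finset.sum_comm (f := fun l k => fderiv ℝ (fun x => g x i l) (x β j ω)
      (fun q => g (x β j ω) q k) * w β j ω k * w (!β) j ω l)]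
    simp only [← Finset.sum_add_distrib]
    refine Finset.sum_congr rfl fun k _ => Finset.sum_congr rfl fun l _ => ?_
    rw [milsteinH_eq]
    split_ifs <;> ring
  have S4 : ∑ k, g (x β j ω) i k * (w β j ω k + w (!β) j ω k)
      = ∑ k, g (x β j ω) i k * w β j ω k + ∑ k, g (x β j ω) i k * w (!β) j ω k := by
    simp only [mul_add, Finset.sum_add_distrib]
  have E2 : ∑ k, (fderiv ℝ (fun x => f x i) (x β j ω)
      (fun l => g (x β j ω) l k) * (r j ^ 2 * 2⁻¹)) * w β j ω k
      = (∑ k, fderiv ℝ (fun x => f x i) (x β j ω) (fun l => g (x β j ω) l k) * w β j ω k)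
        * (r j ^ 2 * 2⁻¹) := by
    rw [Finset.sum_mul]; exact Finset.sum_congr rfl fun k _ => by ring
  have S2 : ∑ k, (g (y β j ω) i k - g (x β j ω) i k
      - ∑ l, fderiv ℝ (fun x => g x i k) (x β j ω) (fun q => g (x β j ω) q l) * w β j ω l)
      * w (!β) j ω k = ∑ k, g (y β j ω) i k * w (!β) j ω k - ∑ k, g (x β j ω) i k * w (!β) j ω k
      - ∑ l, ∑ k, fderiv ℝ (fun x => g x i l) (x β j ω) (fun q => g (x β j ω) q k) * w β j ω k
        * w (!β) j ω l := by
    simp only [sub_mul, Finset.sum_sub_distrib, Finset.sum_mul]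
  have S3 : ∑ k, ∑ l, (milsteinH g (y β j ω) i k l - milsteinH g (x β j ω) i k l)
      * (w (!β) j ω k * w (!β) j ω l - if k = l then r j ^ 2 / 2 else 0)
      = ∑ k, ∑ l, milsteinH g (y β j ω) i k l
        * (w (!β) j ω k * w (!β) j ω l - if k = l then r j ^ 2 / 2 else 0)
      - ∑ k, ∑ l, milsteinH g (x β j ω) i k l
        * (w (!β) j ω k * w (!β) j ω l - if k = l then r j ^ 2 / 2 else 0) := by
    simp only [sub_mul, Finset.sum_sub_distrib]
  rw [E2, S2, S3]
  linear_combination hz + hy - S1 - S4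

end Expansion

section Levels
variable {J : Type 1} {Ω : J → Type} {𝓕 𝓗 : ∀ j, MeasurableSpace (Ω j)}
  {𝓐 𝓑 : Bool → ∀ j, MeasurableSpace (Ω j)} [∀ j, MeasurableSpace (Ω j)] {μ : ∀ j, Measure (Ω j)}
  {r : J → ℝ} [∀ j, IsProbabilityMeasure (μ j)] {d m : ℕ}
  {f : (Fin d → ℝ) → Fin d → ℝ} {g : (Fin d → ℝ) → Fin d → Fin m → ℝ} {C R : ℝ}
  {w : Bool → ∀ j, Ω j → Fin m → ℝ} {x y z : Bool → ∀ j, Ω j → Fin d → ℝ}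
  {xc zc : ∀ j, Ω j → Fin d → ℝ}

lemma OL.mid {φ : (Fin d → ℝ) → ℝ} (hφ : Nice C φ) {x y : ∀ j, Ω j → Fin d → ℝ}
    (hx : ∀ i, OL μ r 0 (fun j ω => x j ω i)) (hy : ∀ i, OL μ r 0 (fun j ω => y j ω i))
    (hxy : ∀ i, OL μ r 1 (fun j ω => x j ω i - y j ω i)) :
    OL μ r 2 (fun j ω => 1 / 2 * (φ (x j ω) + φ (y j ω))
      - φ (fun i => 1 / 2 * (x j ω i + y j ω i))) := by
  have hxy' : ∀ i, OL μ r 1 (fun j ω => (x j ω - y j ω) i) := hxy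
  have hm := hφ.diff.continuous.measurable
  have hmx := fun j => OL.meas hx j
  have hmy := fun j => OL.meas hy j
  refine (((OL.norm hxy').mul (OL.norm hxy')).const_mul C).dom (fun j => ?_) (fun j ω => ?_)
  · refine (((hm.comp (hmx j)).add (hm.comp (hmy j))).const_mul _).sub (hm.comp ?_)
    exact measurable_pi_lambda _ fun i =>
      (((measurable_pi_apply i).comp (hmx j)).add ((measurable_pi_apply i).comp (hmy j))).const_mul _
  · refine (hφ.mid _ _ _ (fun i => rfl)).trans (le_trans (le_of_eq ?_) (le_abs_self _))
    ring

lemma Setup.W1 (S : Setup f g R 𝓕 𝓗 𝓐 𝓑 μ r w x y z xc zc)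
    (k : Fin m) : OL μ r 1 (fun j ω => w false j ω k + w true j ω k) :=
  (S.w1 false k).add (S.w1 true k)

lemma Setup.Wmean (S : Setup f g R 𝓕 𝓗 𝓐 𝓑 μ r w x y z xc zc)
    (j : J) (k : Fin m) : ∫ ω, (w false j ω k + w true j ω k) ∂(μ j) = 0 := by
  rw [integral_add ((S.w1 false k).1 j).integrable ((S.w1 true k).1 j).integrable, S.mean1, S.mean1,
    add_zero]

lemma Setup.Wm (S : Setup f g R 𝓕 𝓗 𝓐 𝓑 μ r w x y z xc zc)
    (j : J) (k : Fin m) : Measurable[𝓗 j] (fun ω => w false j ω k + w true j ω k) :=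
  Measurable.add (S.wH false j k) (S.wH true j k)

lemma Setup.martW (S : Setup f g R 𝓕 𝓗 𝓐 𝓑 μ r w x y z xc zc)
    {q : ℕ} {A : ∀ j, Ω j → ℝ} (hA : OL μ r q A) (hAm : ∀ j, Measurable[𝓕 j] (A j))
    (k : Fin m) : Mart 𝓕 μ r (q + 1) (fun j ω => A j ω * (w false j ω k + w true j ω k)) :=
  Mart.of_mul (𝓖 := 𝓕) (𝓗 := 𝓗) hA (S.W1 k) (fun _ => le_rfl) hAm (fun j => S.Wm j k) S.indF
    (fun j => S.Wmean j k)

lemma Setup.WW2 (S : Setup f g R 𝓕 𝓗 𝓐 𝓑 μ r w x y z xc zc)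
    (k l : Fin m) : OL μ r 2 (fun j ω => (w false j ω k + w true j ω k)
      * (w false j ω l + w true j ω l) - if k = l then r j ^ 2 else 0) := by
  simpa using ww_OL (w := fun j ω k => w false j ω k + w true j ω k) S.hr S.W1 1 k l

lemma Setup.martWW (S : Setup f g R 𝓕 𝓗 𝓐 𝓑 μ r w x y z xc zc)
    {q : ℕ} {A : ∀ j, Ω j → ℝ} (hA : OL μ r q A) (hAm : ∀ j, Measurable[𝓕 j] (A j))
    (k l : Fin m) : Mart 𝓕 μ r (q + 2) (fun j ω => A j ω * ((w false j ω k + w true j ω k)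
      * (w false j ω l + w true j ω l) - if k = l then r j ^ 2 else 0)) := by
  refine Mart.of_mul (𝓖 := 𝓕) (𝓗 := 𝓗) hA (S.WW2 k l) (fun _ => le_rfl) hAm
    (fun j => Measurable.sub_const (Measurable.mul (S.Wm j k) (S.Wm j l)) _) S.indF (fun j => ?_)
  have i1 := fun β => ((S.ww β k l).1 j).integrable
  have i2 := fun β => (((S.w1 β k).mul (S.w1 (!β) l)).1 j).integrable
  have e : ∀ ω, (w false j ω k + w true j ω k)
      * (w false j ω l + w true j ω l) - (if k = l then r j ^ 2 else 0)
      = ((w false j ω k * w false j ω l - if k = l then r j ^ 2 / 2 else 0)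
        + (w true j ω k * w true j ω l - if k = l then r j ^ 2 / 2 else 0))
        + (w false j ω k * w (!false) j ω l + w true j ω k * w (!true) j ω l) := by
    intro ω
    simp only [Bool.not_false, Bool.not_true]
    split_ifs <;> ring
  simp only [e]
  refine (integral_add ((i1 false).add (i1 true)) ((i2 false).add (i2 true))).trans ?_
  have a1 := (integral_add (i1 false) (i1 true)).trans
    (congrArg₂ (· + ·) (S.mean2 false j k l) (S.mean2 true j k l))
  have a2 := (integral_add (i2 false) (i2 true)).trans
    (congrArg₂ (· + ·) (S.mean3 false j k l) (S.mean3 true j k l))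
  refine (congrArg₂ (· + ·) a1 a2).trans ?_
  norm_num

lemma Setup.martA (S : Setup f g R 𝓕 𝓗 𝓐 𝓑 μ r w x y z xc zc)
    {q : ℕ} {A : ∀ j, Ω j → ℝ} (hA : OL μ r q A) (hAm : ∀ j, Measurable[𝓕 j] (A j))
    (β : Bool) (k l : Fin m) : Mart 𝓕 μ r (q + 2) (fun j ω => A j ω *
      (w β j ω k * w (!β) j ω l - w (!β) j ω k * w β j ω l)) := by
  refine Mart.of_mul (𝓖 := 𝓕) (𝓗 := 𝓗) hA (((S.w1 β k).mul (S.w1 (!β) l)).sub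
    ((S.w1 (!β) k).mul (S.w1 β l))) (fun _ => le_rfl) hAm
    (fun j => Measurable.sub (Measurable.mul (S.wH β j k) (S.wH (!β) j l))
      (Measurable.mul (S.wH (!β) j k) (S.wH β j l))) S.indF (fun j => ?_)
  rw [integral_sub (((S.w1 β k).mul (S.w1 (!β) l)).1 j).integrable
    (((S.w1 (!β) k).mul (S.w1 β l)).1 j).integrable]
  have := S.mean3 (!β) j k l
  rw [Bool.not_not] at this
  rw [S.mean3, this, sub_zero]

lemma Setup.zc_eq (S : Setup f g R 𝓕 𝓗 𝓐 𝓑 μ r w x y z xc zc)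
    (i : Fin d) (j : J) (ω : Ω j) : zc j ω i = xc j ω i + f (xc j ω) i * r j ^ 2
      + (∑ k, g (xc j ω) i k * (w false j ω k + w true j ω k))
      + ∑ k, ∑ l, milsteinH g (xc j ω) i k l * ((w false j ω k + w true j ω k)
          * (w false j ω l + w true j ω l) - if k = l then r j ^ 2 else 0) := by
  rw [S.zcstep]; rfl

lemma Setup.expansion' (hC : 0 ≤ C)
    (hf : ∀ i, Nice C (fun x => f x i))
    (hg : ∀ i j, Nice C (fun x => g x i j))
    (S : Setup f g R 𝓕 𝓗 𝓐 𝓑 μ r w x y z xc zc)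
    (β : Bool) (i : Fin d) :
    Rem 𝓕 μ r 2 (fun j ω => z β j ω i - x β j ω i - f (x β j ω) i * r j ^ 2
      - ∑ k, g (x β j ω) i k * (w false j ω k + w true j ω k)
      - ∑ k, ∑ l, milsteinH g (x β j ω) i k l * ((w false j ω k + w true j ω k)
          * (w false j ω l + w true j ω l) - if k = l then r j ^ 2 else 0)
      - ∑ k, ∑ l, milsteinH g (x β j ω) i k l * (w β j ω k * w (!β) j ω l
          - w (!β) j ω k * w β j ω l)) := by
  refine (S.expansion hC hf hg β i).congr fun j ω => ?_
  cases β
  · rfl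
  · simp only [Bool.not_true, add_comm (w false j ω _)]

lemma H_meas (hg : ∀ i j, Nice C (fun x => g x i j)) (i : Fin d) (k l : Fin m) :
    Measurable (fun x => milsteinH g x i k l) := (H_cont hg i k l).measurable

lemma Setup.level1 (hC : 0 ≤ C)
    (hf : ∀ i, Nice C (fun x => f x i))
    (hg : ∀ i j, Nice C (fun x => g x i j))
    (S : Setup f g R 𝓕 𝓗 𝓐 𝓑 μ r w x y z xc zc)
    (β : Bool) (i : Fin d) :
    Rem 𝓕 μ r 1 (fun j ω => (z β j ω i - zc j ω i) - (x β j ω i - xc j ω i)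
      - (f (x β j ω) i - f (xc j ω) i) * r j ^ 2
      - ∑ k, (g (x β j ω) i k - g (xc j ω) i k) * (w false j ω k + w true j ω k)) := by
  have t1 := (S.expansion' hC hf hg β i).mono S.hr (by norm_num : 1 ≤ 2)
  have t2 : Mart 𝓕 μ r (0 + 2) (fun j ω => ∑ k, ∑ l,
      (milsteinH g (x β j ω) i k l - milsteinH g (xc j ω) i k l) *
      ((w false j ω k + w true j ω k)
          * (w false j ω l + w true j ω l) - if k = l then r j ^ 2 else 0)) := by
    refine Mart.sum _ fun k _ => Mart.sum _ fun l _ => S.martWW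
      ((OL.comp_H hC hg (S.x0 β) i k l).sub (OL.comp_H hC hg S.xc0 i k l)) (fun j => ?_) k l
    exact Measurable.sub ((H_meas hg i k l).comp (S.xF β j)) ((H_meas hg i k l).comp (S.xcF j))
  have t3 : Mart 𝓕 μ r (0 + 2) (fun j ω => ∑ k, ∑ l, milsteinH g (x β j ω) i k l *
      (w β j ω k * w (!β) j ω l - w (!β) j ω k * w β j ω l)) := by
    refine Mart.sum _ fun k _ => Mart.sum _ fun l _ => S.martA
      (OL.comp_H hC hg (S.x0 β) i k l) (fun j => ?_) β k l
    exact (H_meas hg i k l).comp (S.xF β j)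
  refine (t1.add ((Rem.of_Mart t2).add (Rem.of_Mart t3))).congr fun j ω => ?_
  rw [S.zc_eq]
  simp only [sub_mul (milsteinH g _ i _ _), sub_mul (g _ i _), Finset.sum_sub_distrib]
  ring

lemma Setup.level2 (hC : 0 ≤ C)
    (hf : ∀ i, Nice C (fun x => f x i))
    (hg : ∀ i j, Nice C (fun x => g x i j))
    (S : Setup f g R 𝓕 𝓗 𝓐 𝓑 μ r w x y z xc zc)
    (h1 : ∀ β i, OL μ r 1 (fun j ω => x β j ω i - xc j ω i)) (i : Fin d) :
    Rem 𝓕 μ r 2 (fun j ω => (1 / 2 * (z false j ω i + z true j ω i) - zc j ω i)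
      - (1 / 2 * (x false j ω i + x true j ω i) - xc j ω i)
      - (f (fun i => 1 / 2 * (x false j ω i + x true j ω i)) i - f (xc j ω) i) * r j ^ 2
      - ∑ k, (g (fun i => 1 / 2 * (x false j ω i + x true j ω i)) i k - g (xc j ω) i k)
        * (w false j ω k + w true j ω k)) := by
  have hfa : ∀ i, OL μ r 1 (fun j ω => x false j ω i - x true j ω i) := fun i =>
    ((h1 false i).sub (h1 true i)).congr fun j ω => by ring
  have t1 := ((S.expansion' hC hf hg false i).add (S.expansion' hC hf hg true i)).const_mul (1 / 2)
  have t2 : OL μ r (2 + 2) (fun j ω => (1 / 2 * (f (x false j ω) i + f (x true j ω) i)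
      - f (fun i => 1 / 2 * (x false j ω i + x true j ω i)) i) * (r j ^ 2 * 1)) :=
    (OL.mid (hf i) (S.x0 false) (S.x0 true) hfa).mul (OL.rsq S.hr 1)
  have hxb : ∀ j, Measurable[𝓕 j] (fun ω => (fun i => 1 / 2 * (x false j ω i + x true j ω i)
      : Fin d → ℝ)) := by
    intro j
    refine @measurable_pi_lambda _ _ _ (𝓕 j) _ _ fun i => ?_
    exact Measurable.const_mul
        (Measurable.add ((measurable_pi_apply i).comp (S.xF false j))
          ((measurable_pi_apply i).comp (S.xF true j))) _
  have t3 : Mart 𝓕 μ r (2 + 1) (fun j ω => ∑ k, (1 / 2 * (g (x false j ω) i k + g (x true j ω) i k)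
      - g (fun i => 1 / 2 * (x false j ω i + x true j ω i)) i k)
        * (w false j ω k + w true j ω k)) := by
    refine Mart.sum _ fun k _ => S.martW (OL.mid (hg i k) (S.x0 false) (S.x0 true) hfa)
      (fun j => ?_) k
    have hm : Measurable (fun x => g x i k) := (hg i k).diff.continuous.measurable
    exact Measurable.sub (Measurable.const_mul (Measurable.add (hm.comp (S.xF false j))
      (hm.comp (S.xF true j))) _) (hm.comp (hxb j))
  have t4 : ∀ β, Mart 𝓕 μ r (1 + 2) (fun j ω => ∑ k, ∑ l,
      (milsteinH g (x β j ω) i k l - milsteinH g (xc j ω) i k l) *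
      ((w false j ω k + w true j ω k)
          * (w false j ω l + w true j ω l) - if k = l then r j ^ 2 else 0)) := by
    intro β
    refine Mart.sum _ fun k _ => Mart.sum _ fun l _ => S.martWW
      (OL.lip_H hC hg S.xc0 (S.x0 β) (h1 β) i k l) (fun j => ?_) k l
    exact Measurable.sub ((H_meas hg i k l).comp (S.xF β j)) ((H_meas hg i k l).comp (S.xcF j))
  have t5 : Mart 𝓕 μ r (1 + 2) (fun j ω => ∑ k, ∑ l,
      (milsteinH g (x false j ω) i k l - milsteinH g (x true j ω) i k l) *
      (w false j ω k * w (!false) j ω l - w (!false) j ω k * w false j ω l)) := by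
    refine Mart.sum _ fun k _ => Mart.sum _ fun l _ => S.martA
      (OL.lip_H hC hg (S.x0 true) (S.x0 false) hfa i k l) (fun j => ?_) false k l
    exact Measurable.sub ((H_meas hg i k l).comp (S.xF false j))
      ((H_meas hg i k l).comp (S.xF true j))
  refine ((((t1.add (Rem.of_OL t2)).add (Rem.of_Mart t3)).add
    ((Rem.of_Mart ((t4 false).add (t4 true))).const_mul (1 / 2))).add
    ((Rem.of_Mart t5).const_mul (1 / 2))).congr fun j ω => ?_
  rw [S.zc_eq]
  have a1 : ∑ k, ∑ l, milsteinH g (x true j ω) i k l * (w true j ω k * w (!true) j ω l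
          - w (!true) j ω k * w true j ω l)
      = - ∑ k, ∑ l, milsteinH g (x true j ω) i k l * (w false j ω k * w (!false) j ω l
          - w (!false) j ω k * w false j ω l) := by
    simp only [← Finset.sum_neg_distrib, Bool.not_true, Bool.not_false]
    exact Finset.sum_congr rfl fun k _ => Finset.sum_congr rfl fun l _ => by ring
  rw [a1]
  simp only [sub_mul (milsteinH g _ i _ _), sub_mul (g _ i _), sub_mul (1 / 2 * (g _ i _ + g _ i _)),
    Finset.sum_sub_distrib, mul_assoc (1 / 2 : ℝ) (g _ i _ + g _ i _), add_mul (g _ i _),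
    ← Finset.mul_sum, Finset.sum_add_distrib]
  ring

lemma Setup.zc2 (hC : 0 ≤ C)
    (hf : ∀ i, Nice C (fun x => f x i))
    (hg : ∀ i j, Nice C (fun x => g x i j))
    (S : Setup f g R 𝓕 𝓗 𝓐 𝓑 μ r w x y z xc zc)
    (i : Fin d) : OL μ r 2 (fun j ω => zc j ω i - xc j ω i
      - ∑ k, g (xc j ω) i k * (w false j ω k + w true j ω k)) := by
  have h1 : OL μ r (0 + 2) (fun j ω => f (xc j ω) i * (r j ^ 2 * 1)) :=
    (OL.comp_nice (hf i) S.xc0).mul (OL.rsq S.hr _)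
  have h2 : OL μ r (0 + 2) (fun j ω => ∑ k, ∑ l, milsteinH g (xc j ω) i k l *
      ((w false j ω k + w true j ω k)
          * (w false j ω l + w true j ω l) - if k = l then r j ^ 2 else 0)) :=
    OL.sum _ fun k _ => OL.sum _ fun l _ => (OL.comp_H hC hg S.xc0 i k l).mul (S.WW2 k l)
  refine (h1.add h2).congr fun j ω => ?_
  rw [S.zc_eq]
  ring

lemma Setup.mid1 (hC : 0 ≤ C)
    (hf : ∀ i, Nice C (fun x => f x i))
    (hg : ∀ i j, Nice C (fun x => g x i j))
    (S : Setup f g R 𝓕 𝓗 𝓐 𝓑 μ r w x y z xc zc)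
    (h1 : ∀ β i, OL μ r 1 (fun j ω => x β j ω i - xc j ω i)) (i : Fin d) :
    OL μ r 1 (fun j ω => y false j ω i - y true j ω i) :=
  ((((S.e1 hC hf hg false i).sub (S.e1 hC hf hg true i)).add (h1 false i)).sub (h1 true i)).congr
    fun j ω => by ring

lemma Setup.mid2 (hC : 0 ≤ C)
    (hf : ∀ i, Nice C (fun x => f x i))
    (hg : ∀ i j, Nice C (fun x => g x i j))
    (S : Setup f g R 𝓕 𝓗 𝓐 𝓑 μ r w x y z xc zc)
    (h1 : ∀ β i, OL μ r 1 (fun j ω => x β j ω i - xc j ω i))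
    (h2 : ∀ i, OL μ r 2 (fun j ω => 1 / 2 * (x false j ω i + x true j ω i) - xc j ω i)) (i : Fin d) :
    OL μ r 2 (fun j ω => 1 / 2 * (y false j ω i + y true j ω i)
      - 1 / 2 * (xc j ω i + zc j ω i)) := by
  have t1 : ∀ β, OL μ r (1 + 1) (fun j ω => ∑ k, (g (x β j ω) i k - g (xc j ω) i k) * w β j ω k) :=
    fun β => OL.sum _ fun k _ => (OL.lip_nice (hg i k) S.xc0 (S.x0 β) (h1 β)).mul (S.w1 β k)
  refine ((h2 i).add (((((S.e2 hC hf hg false i).add (S.e2 hC hf hg true i)).sub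
    (S.zc2 hC hf hg i)).add ((t1 false).add (t1 true))).const_mul (1 / 2))).congr fun j ω => ?_
  simp only [sub_mul, mul_add, Finset.sum_sub_distrib, Finset.sum_add_distrib]
  ring

end Levels

lemma gauss_facts {Ω : Type} [MeasurableSpace Ω] {μ : Measure Ω} [IsProbabilityMeasure μ]
    (s : ℝ) (hs : 0 < s) (Y : Ω → ℝ) (hY : Measurable Y)
    (hmap : μ.map Y = gaussianReal 0 (Real.toNNReal s)) :
    AM μ Y ∧ ∫ ω, Y ω ∂μ = 0 ∧ ∫ ω, Y ω * Y ω ∂μ = s ∧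
      ∀ q : ℕ, ∫ ω, |Y ω / √s| ^ q ∂μ = ∫ x, |x| ^ q ∂(gaussianReal 0 1) := by
  refine ⟨⟨hY, fun q => ?_⟩, ?_, ?_, fun q => ?_⟩
  · have h1 : MemLp id (q : ENNReal) (gaussianReal 0 (Real.toNNReal s)) :=
      memLp_id_gaussianReal' _ (by simp)
    have h2 : Integrable (fun x : ℝ => |x| ^ q) (μ.map Y) := by
      rw [hmap]
      simpa using h1.integrable_norm_pow'
    exact (integrable_map_measure (by fun_prop) hY.aemeasurable).1 h2
  · have : ∫ x, x ∂(μ.map Y) = ∫ ω, Y ω ∂μ := integral_map hY.aemeasurable (by fun_prop)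
    rw [← this, hmap, integral_id_gaussianReal]
  · have : ∫ x, x * x ∂(μ.map Y) = ∫ ω, Y ω * Y ω ∂μ :=
      integral_map hY.aemeasurable (by fun_prop)
    rw [← this, hmap]
    have h := variance_fun_id_gaussianReal (μ := 0) (v := Real.toNNReal s)
    rw [variance_eq_integral (by fun_prop), integral_id_gaussianReal] at h
    simp only [sub_zero, Real.coe_toNNReal s hs.le] at h
    simpa only [pow_two] using h
  · have hsc : μ.map (fun ω => Y ω / √s) = gaussianReal 0 1 := by
      have e : (fun ω => Y ω / √s) = (fun x => x / √s) ∘ Y := rfl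
      rw [e, ← Measure.map_map (by fun_prop) hY, hmap, gaussianReal_map_div_const]
      congr 1
      · simp
      · rw [div_eq_one_iff_eq]
        · ext; simp [hs.le]
        · intro h
          have := congrArg NNReal.toReal h
          simp [hs.le] at this
          linarith
    rw [← hsc, integral_map (by fun_prop) (by fun_prop)]

section MomStep
variable {d m : ℕ} {f : (Fin d → ℝ) → Fin d → ℝ} {g : (Fin d → ℝ) → Fin d → Fin m → ℝ} {C : ℝ}

lemma step_AM (hC : 0 ≤ C) (hf : ∀ i, Nice C (fun x => f x i))
    (hg : ∀ i j, Nice C (fun x => g x i j)) {Ω : Type} [MeasurableSpace Ω] {μ : Measure Ω}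
    [IsProbabilityMeasure μ] (s : ℝ) {X : Ω → Fin d → ℝ} {w : Ω → Fin m → ℝ}
    (hX : ∀ i, AM μ (fun ω => X ω i)) (hw : ∀ k, AM μ (fun ω => w ω k)) (i : Fin d) :
    AM μ (fun ω => milsteinStep f g s (X ω) (w ω) i) := by
  have hXm : Measurable X := measurable_pi_lambda _ fun i => (hX i).1
  have hg0 : ∀ φ : (Fin d → ℝ) → ℝ, ∀ K : ℝ, Continuous φ → (∀ x, |φ x| ≤ K * (1 + ‖x‖)) →
      AM μ (fun ω => φ (X ω)) := fun φ K h1 h2 =>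
    ((AM.const K).mul ((AM.const 1).add (AM.norm hX))).dom (h1.measurable.comp hXm)
      fun ω => (h2 _).trans (le_abs_self _)
  unfold milsteinStep
  refine (((hX i).add ((hg0 _ C (hf i).diff.continuous (hf i).grow).mul (AM.const _))).add
    (AM.sum _ fun k _ => (hg0 _ C (hg i k).diff.continuous (hg i k).grow).mul (hw k))).add
    (AM.sum _ fun k _ => AM.sum _ fun l _ =>
      (hg0 _ (C ^ 2) (H_cont hg i k l) (fun x => H_grow hC hg x i k l)).mul
        (((hw k).mul (hw l)).sub (AM.const _)))

lemma step_meas (hf : ∀ i, Nice C (fun x => f x i))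
    (hg : ∀ i j, Nice C (fun x => g x i j)) {Ω : Type} [MeasurableSpace Ω] (s : ℝ)
    {X : Ω → Fin d → ℝ} {w : Ω → Fin m → ℝ}
    (hX : Measurable X) (hw : ∀ k, Measurable (fun ω => w ω k)) :
    Measurable (fun ω => milsteinStep f g s (X ω) (w ω)) := by
  refine measurable_pi_lambda _ fun i => ?_
  unfold milsteinStep
  have h1 := (hf i).diff.continuous.measurable.comp hX
  have h2 := fun k => (hg i k).diff.continuous.measurable.comp hX
  have h3 := fun k l => (H_cont hg i k l).measurable.comp hX
  refine ((((measurable_pi_apply i).comp hX).add (h1.mul_const _)).add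
    (Finset.measurable_sum _ fun k _ => (h2 k).mul (hw k))).add
    (Finset.measurable_sum _ fun k _ => Finset.measurable_sum _ fun l _ =>
      (h3 k l).mul (((hw k).mul (hw l)).sub_const _))

lemma mom_step (hC : 0 ≤ C) (hf : ∀ i, Nice C (fun x => f x i))
    (hg : ∀ i j, Nice C (fun x => g x i j)) (n : ℕ) (hn : Even n) (R K : ℝ) (hK : 0 ≤ K) :
    ∃ B : ℝ, 0 ≤ B ∧ ∀ {Ω : Type} (𝓖 𝓗 : MeasurableSpace Ω) [MeasurableSpace Ω]
      (μ : Measure Ω) [IsProbabilityMeasure μ] (r a : ℝ) (X X' : Ω → Fin d → ℝ)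
      (w : Ω → Fin m → ℝ), 0 < r → r ≤ R → 0 ≤ a → a ≤ 1 →
      (∀ i, AM μ (fun ω => X ω i)) → Measurable[𝓖] X → (∀ k, AM μ (fun ω => w ω k)) →
      (∀ k, Measurable[𝓗] (fun ω => w ω k)) → Indep 𝓖 𝓗 μ →
      (∀ k, ∫ ω, w ω k ∂μ = 0) →
      (∀ k l, ∫ ω, (w ω k * w ω l - if k = l then a * r ^ 2 else 0) ∂μ = 0) →
      (∀ k, ∫ ω, |w ω k / r| ^ (n + 2) ∂μ ≤ K) →
      (∀ k l, ∫ ω, |(w ω k * w ω l - if k = l then a * r ^ 2 else 0) / r| ^ (n + 2) ∂μ ≤ K) →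
      (∀ ω, X' ω = milsteinStep f g (a * r ^ 2) (X ω) (w ω)) →
      ∑ i, ∫ ω, |X' ω i| ^ (n + 2) ∂μ ≤ ∑ i, ∫ ω, |X ω i| ^ (n + 2) ∂μ
        + B * r ^ 2 * (∑ i, ∫ ω, |X ω i| ^ (n + 2) ∂μ + 1) := by
  obtain ⟨B, hB, h⟩ := vstep d (Fin m ⊕ Fin m × Fin m) n hn R (C + C ^ 2) K (by positivity) hK
  refine ⟨B, hB, ?_⟩
  intro Ω 𝓖 𝓗 _ μ _ r a X X' w hr hrR ha ha1 hX hXG hw hwH hind hm1 hm2 hK1 hK2 hX'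
  have hXm : Measurable X := measurable_pi_lambda _ fun i => (hX i).1
  have hb1 : ∀ ω, C * (1 + ‖X ω‖) ≤ (C + C ^ 2) * (‖X ω‖ + 1) := fun ω => by
    nlinarith [norm_nonneg (X ω), sq_nonneg C, mul_nonneg (sq_nonneg C) (norm_nonneg (X ω))]
  have hb2 : ∀ ω, C ^ 2 * (1 + ‖X ω‖) ≤ (C + C ^ 2) * (‖X ω‖ + 1) := fun ω => by
    nlinarith [norm_nonneg (X ω), mul_nonneg hC (norm_nonneg (X ω))]
  have := h 𝓖 (fun _ => 𝓗) μ r 1 X X' (fun i ω => f (X ω) i * a)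
    (fun i k ω => Sum.elim (fun k => g (X ω) i k) (fun kl => milsteinH g (X ω) i kl.1 kl.2) k)
    (fun k ω => Sum.elim (fun k => w ω k)
      (fun kl => w ω kl.1 * w ω kl.2 - if kl.1 = kl.2 then a * r ^ 2 else 0) k)
    (fun _ _ => 0) (fun _ _ => 0) hr hrR zero_le_one hX
    (fun i => ((hf i).diff.continuous.measurable.comp hXm).mul_const _)
    (fun i k => ?_) (fun i ω => ?_) (fun i k ω => ?_) (fun k => ?_) (fun k => ?_) (fun k => ?_)
    (fun i => (measurable_pi_apply i).comp hXG) (fun i k => ?_) (fun k => ?_) (fun _ => hind)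
    (fun _ => AM.const 0) (fun _ => AM.const 0) (by simp) (fun _ => by simpa using hK)
    (fun _ => by simpa using hK)
    (fun i ω => ?_)
  · simpa using this
  · rcases k with k | kl
    · exact (hg i k).diff.continuous.measurable.comp hXm
    · exact (H_cont hg i kl.1 kl.2).measurable.comp hXm
  · rw [abs_mul, abs_of_nonneg ha]
    exact (mul_le_of_le_one_right (abs_nonneg _) ha1).trans (((hf i).grow _).trans (hb1 ω))
  · rcases k with k | kl
    · exact ((hg i k).grow _).trans (hb1 ω)
    · exact (H_grow hC hg _ _ _ _).trans (hb2 ω)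
  · rcases k with k | kl
    · exact hw k
    · exact ((hw kl.1).mul (hw kl.2)).sub (AM.const _)
  · rcases k with k | kl
    · exact hm1 k
    · exact hm2 kl.1 kl.2
  · rcases k with k | kl
    · exact hK1 k
    · exact hK2 kl.1 kl.2
  · rcases k with k | kl
    · exact (hg i k).diff.continuous.measurable.comp hXG
    · exact (H_cont hg i kl.1 kl.2).measurable.comp hXG
  · rcases k with k | kl
    · exact hwH k
    · exact Measurable.sub_const (Measurable.mul (hwH kl.1) (hwH kl.2)) _
  · rw [hX']
    simp only [milsteinStep, Fintype.sum_sum_type, Sum.elim_inl, Sum.elim_inr,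
      Fintype.sum_prod_type]
    ring

end MomStep

lemma pow_le_one_add (y : ℝ) (hy : 0 ≤ y) (q : ℕ) : y ^ q ≤ 1 + y ^ (2 * q + 2) := by
  rcases le_total y 1 with h | h
  · have := pow_le_one₀ (n := q) hy h
    have : 0 ≤ y ^ (2 * q + 2) := by positivity
    linarith
  · have := pow_le_pow_right₀ h (by omega : q ≤ 2 * q + 2)
    linarith

lemma AM.int_pow_le {Ω : Type} [MeasurableSpace Ω] {μ : Measure Ω} [IsProbabilityMeasure μ]
    {Y : Ω → ℝ} (hY : AM μ Y) (q : ℕ) {K : ℝ} (h : ∫ ω, |Y ω| ^ (2 * q + 2) ∂μ ≤ K) :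
    ∫ ω, |Y ω| ^ q ∂μ ≤ 1 + K := by
  have := integral_mono (hY.2 q) ((integrable_const 1).add (hY.2 (2 * q + 2)))
    (fun ω => pow_le_one_add _ (abs_nonneg (Y ω)) q)
  refine this.trans ?_
  simp only [Pi.add_apply]
  rw [integral_add (integrable_const 1) (hY.2 (2 * q + 2))]
  simpa using h

/-- All data of the antithetic setting for one value of `N`. -/
structure Cfg {d m : ℕ} (T : ℝ) (f : (Fin d → ℝ) → Fin d → ℝ)
    (g : (Fin d → ℝ) → Fin d → Fin m → ℝ) (x₀ : Fin d → ℝ) : Type 1 where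
  N : ℕ
  hN : 1 ≤ N
  Ω : Type
  mΩ : MeasurableSpace Ω
  μ : Measure Ω
  prob : IsProbabilityMeasure μ
  W : Fin N → Bool → Ω → Fin m → ℝ
  X : Bool → ℕ → Ω → Fin d → ℝ
  Xc : ℕ → Ω → Fin d → ℝ
  Wm : ∀ n b j, Measurable fun ω => W n b ω j
  Wg : ∀ n b j, μ.map (fun ω => W n b ω j) = gaussianReal 0 (Real.toNNReal (T / N / 2))
  Wi : iIndepFun (fun q : Fin N × Bool × Fin m => fun ω => W q.1 q.2.1 ω q.2.2) μ
  X0 : ∀ β ω, X β 0 ω = x₀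
  Xc0 : ∀ ω, Xc 0 ω = x₀
  Xodd : ∀ β (n : Fin N) ω, X β (2 * (n : ℕ) + 1) ω
    = milsteinStep f g (T / N / 2) (X β (2 * (n : ℕ)) ω) (W n β ω)
  Xeven : ∀ β (n : Fin N) ω, X β (2 * (n : ℕ) + 2) ω
    = milsteinStep f g (T / N / 2) (X β (2 * (n : ℕ) + 1) ω) (W n (!β) ω)
  Xcs : ∀ (n : Fin N) ω, Xc ((n : ℕ) + 1) ω
    = milsteinStep f g (T / N) (Xc (n : ℕ) ω) (W n false ω + W n true ω)

section Config
variable {d m : ℕ} {T : ℝ} {f : (Fin d → ℝ) → Fin d → ℝ}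
  {g : (Fin d → ℝ) → Fin d → Fin m → ℝ} {x₀ : Fin d → ℝ}

/-- sigma-algebra generated by a set of increments -/
def Cfg.sig (c : Cfg T f g x₀) (s : Set (Fin c.N × Bool × Fin m)) : MeasurableSpace c.Ω :=
  ⨆ i ∈ s, MeasurableSpace.comap (fun ω => c.W i.1 i.2.1 ω i.2.2) inferInstance

instance instMΩ (c : Cfg T f g x₀) : MeasurableSpace c.Ω := c.mΩ
instance instProb (c : Cfg T f g x₀) : IsProbabilityMeasure c.μ := c.prob

lemma Cfg.sig_mono (c : Cfg T f g x₀) {s t : Set (Fin c.N × Bool × Fin m)} (h : s ⊆ t) :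
    c.sig s ≤ c.sig t := biSup_mono h

lemma Cfg.sig_le (c : Cfg T f g x₀) (s : Set (Fin c.N × Bool × Fin m)) :
    c.sig s ≤ c.mΩ := iSup₂_le fun i _ => (c.Wm i.1 i.2.1 i.2.2).comap_le

lemma Cfg.sig_indep (c : Cfg T f g x₀) {s t : Set (Fin c.N × Bool × Fin m)} (h : Disjoint s t) :
    Indep (c.sig s) (c.sig t) c.μ :=
  indep_iSup_of_disjoint
    (m := fun i : Fin c.N × Bool × Fin m =>
      MeasurableSpace.comap (fun ω => c.W i.1 i.2.1 ω i.2.2) inferInstance)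
    (fun i => (c.Wm i.1 i.2.1 i.2.2).comap_le) c.Wi.iIndep h

lemma Cfg.sig_W (c : Cfg T f g x₀) {s : Set (Fin c.N × Bool × Fin m)} (n : Fin c.N) (b : Bool)
    (k : Fin m) (h : (n, b, k) ∈ s) : Measurable[c.sig s] (fun ω => c.W n b ω k) := by
  have h1 : MeasurableSpace.comap (fun ω => c.W n b ω k) inferInstance ≤ c.sig s :=
    le_iSup₂ (f := fun (i : Fin c.N × Bool × Fin m) (_ : i ∈ s) =>
      MeasurableSpace.comap (fun ω => c.W i.1 i.2.1 ω i.2.2) inferInstance) (n, b, k) h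
  exact (comap_measurable _).mono h1 le_rfl

/-- square root of the coarse step -/
noncomputable def Cfg.r (c : Cfg T f g x₀) : ℝ := √(T / c.N)

lemma Cfg.step_pos (hT : 0 < T) (c : Cfg T f g x₀) : 0 < T / c.N := by
  have : (0 : ℝ) < c.N := by exact_mod_cast c.hN
  positivity

lemma Cfg.r_pos (hT : 0 < T) (c : Cfg T f g x₀) : 0 < c.r := Real.sqrt_pos.2 (c.step_pos hT)

lemma Cfg.r_le (hT : 0 < T) (c : Cfg T f g x₀) : c.r ≤ √T := by
  refine Real.sqrt_le_sqrt (div_le_self hT.le ?_)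
  exact_mod_cast c.hN

lemma Cfg.r_sq (hT : 0 < T) (c : Cfg T f g x₀) : c.r ^ 2 = T / c.N :=
  Real.sq_sqrt (c.step_pos hT).le

lemma Cfg.N_r (hT : 0 < T) (c : Cfg T f g x₀) : c.N * c.r ^ 2 = T := by
  have : (0 : ℝ) < c.N := by exact_mod_cast c.hN
  rw [c.r_sq hT]; field_simp

lemma Cfg.gauss (hT : 0 < T) (c : Cfg T f g x₀) (n : Fin c.N) (b : Bool) (k : Fin m) :
    AM c.μ (fun ω => c.W n b ω k) ∧ ∫ ω, c.W n b ω k ∂c.μ = 0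
      ∧ ∫ ω, c.W n b ω k * c.W n b ω k ∂c.μ = T / c.N / 2 ∧
      ∀ q : ℕ, ∫ ω, |c.W n b ω k / √(T / c.N / 2)| ^ q ∂c.μ = ∫ x, |x| ^ q ∂(gaussianReal 0 1) :=
  gauss_facts (T / c.N / 2) (half_pos (c.step_pos hT)) _ (c.Wm n b k) (c.Wg n b k)

lemma Cfg.mean2 (hT : 0 < T) (c : Cfg T f g x₀) (n : Fin c.N) (b : Bool) (k l : Fin m) :
    ∫ ω, (c.W n b ω k * c.W n b ω l - if k = l then c.r ^ 2 / 2 else 0) ∂c.μ = 0 := by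
  have a := c.gauss hT n b
  rw [integral_sub ((a k).1.mul (a l).1).integrable (integrable_const _)]
  by_cases h : k = l
  · subst h
    rw [(a k).2.2.1, c.r_sq hT]
    simp
  · have hi : IndepFun (fun ω => c.W n b ω k) (fun ω => c.W n b ω l) c.μ :=
      c.Wi.indepFun (i := (n, b, k)) (j := (n, b, l)) (by simpa using h)
    rw [hi.integral_fun_mul_eq_mul_integral (c.Wm n b k).aestronglyMeasurable
      (c.Wm n b l).aestronglyMeasurable, (a k).2.1]
    simp [h]

lemma Cfg.mean3 (hT : 0 < T) (c : Cfg T f g x₀) (n : Fin c.N) (b : Bool) (k l : Fin m) :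
    ∫ ω, c.W n b ω k * c.W n (!b) ω l ∂c.μ = 0 := by
  have hi : IndepFun (fun ω => c.W n b ω k) (fun ω => c.W n (!b) ω l) c.μ :=
    c.Wi.indepFun (i := (n, b, k)) (j := (n, !b, l)) (by simp)
  rw [hi.integral_fun_mul_eq_mul_integral (c.Wm n b k).aestronglyMeasurable
      (c.Wm n (!b) l).aestronglyMeasurable, (c.gauss hT n b k).2.1, zero_mul]

variable (T f g x₀) in
/-- index of all coarse steps of all configurations -/
def JJ : Type 1 := Σ c : Cfg T f g x₀, Fin c.N

/-- probability space at an index -/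
abbrev JJ.Om (j : JJ T f g x₀) : Type := j.1.Ω
/-- measure at an index -/
abbrev JJ.mu (j : JJ T f g x₀) : Measure j.Om := j.1.μ
/-- root step at an index -/
noncomputable abbrev JJ.rr (j : JJ T f g x₀) : ℝ := j.1.r

lemma w_OL (hT : 0 < T) (β : Bool) (k : Fin m) :
    OL (J := JJ T f g x₀) JJ.mu JJ.rr 1 (fun j ω => j.1.W j.2 β ω k) := by
  refine ⟨fun j => (j.1.gauss hT j.2 β k).1, fun q => ⟨∫ x, |x| ^ q ∂(gaussianReal 0 1),
    fun j => ?_⟩⟩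
  have a := j.1.gauss hT j.2 β k
  rw [← a.2.2.2 q]
  refine integral_mono ((a.1.div _).2 q) ((a.1.div _).2 q) fun ω => ?_
  have h1 : 0 < √(T / j.1.N / 2) := Real.sqrt_pos.2 (half_pos (j.1.step_pos hT))
  have h2 : √(T / j.1.N / 2) ≤ j.rr ^ 1 := by
    rw [pow_one]
    exact Real.sqrt_le_sqrt (by have := j.1.step_pos hT; linarith)
  have h3 : 0 < j.rr ^ 1 := h1.trans_le h2
  simp only [abs_div, abs_of_pos h1, abs_of_pos h3]
  gcongr

end Config

lemma OL.unif {J : Type 1} {Ω : J → Type} [∀ j, MeasurableSpace (Ω j)] {μ : ∀ j, Measure (Ω j)}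
    {r : J → ℝ} {ι : Type*} [Fintype ι] {k : ℕ} {Y : ι → ∀ j, Ω j → ℝ}
    (h : ∀ i, OL μ r k (Y i)) (q : ℕ) :
    ∃ K, 0 ≤ K ∧ ∀ i j, ∫ ω, |Y i j ω / r j ^ k| ^ q ∂(μ j) ≤ K := by
  choose K hK using fun i => (h i).2 q
  refine ⟨∑ i, |K i|, by positivity, fun i j => (hK i j).trans ((le_abs_self _).trans ?_)⟩
  exact Finset.single_le_sum (f := fun i => |K i|) (fun _ _ => abs_nonneg _) (Finset.mem_univ i)

section Moments
variable {d m : ℕ} {T : ℝ} {f : (Fin d → ℝ) → Fin d → ℝ}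
  {g : (Fin d → ℝ) → Fin d → Fin m → ℝ} {x₀ : Fin d → ℝ} {C : ℝ}

lemma Cfg.fine_step (c : Cfg T f g x₀) (β : Bool) (k : ℕ) (hk : k < 2 * c.N) :
    ∃ (n : Fin c.N) (b : Bool), (2 * (n : ℕ) + if b = β then 0 else 1) = k ∧
      ∀ ω, c.X β (k + 1) ω = milsteinStep f g (T / c.N / 2) (c.X β k ω) (c.W n b ω) := by
  rcases Nat.even_or_odd' k with ⟨n, h | h⟩
  · refine ⟨⟨n, by omega⟩, β, by simp [h], fun ω => ?_⟩
    subst h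
    exact c.Xodd β ⟨n, by omega⟩ ω
  · refine ⟨⟨n, by omega⟩, !β, by simp [h], fun ω => ?_⟩
    subst h
    exact c.Xeven β ⟨n, by omega⟩ ω

/-- increments used before fine time `k` -/
def Cfg.past (c : Cfg T f g x₀) (β : Bool) (k : ℕ) : Set (Fin c.N × Bool × Fin m) :=
  {i | (2 * (i.1 : ℕ) + if i.2.1 = β then 0 else 1) < k}

/-- increments used before coarse time `n` -/
def Cfg.pastc (c : Cfg T f g x₀) (n : ℕ) : Set (Fin c.N × Bool × Fin m) :=
  {i | (i.1 : ℕ) < n}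

lemma Cfg.past_mono (c : Cfg T f g x₀) (β : Bool) {k l : ℕ} (h : k ≤ l) :
    c.past β k ⊆ c.past β l := fun _ hi => lt_of_lt_of_le (show _ < k from hi) h

lemma Cfg.past_le_pastc (c : Cfg T f g x₀) (β : Bool) (n : ℕ) : c.past β (2 * n) ⊆ c.pastc n := by
  intro i hi
  simp only [Cfg.past, Cfg.pastc, Set.mem_ofPred_eq] at hi ⊢
  omega

lemma Cfg.pastc_le_past (c : Cfg T f g x₀) (β : Bool) (n : ℕ) :
    c.pastc n ⊆ c.past β (2 * n) := by
  intro i hi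
  simp only [Cfg.past, Cfg.pastc, Set.mem_ofPred_eq] at hi ⊢
  split_ifs <;> omega

lemma Cfg.sig_WW (c : Cfg T f g x₀) {s : Set (Fin c.N × Bool × Fin m)} (n : Fin c.N)
    (k : Fin m) (h : ∀ b, (n, b, k) ∈ s) :
    Measurable[c.sig s] (fun ω => (c.W n false ω + c.W n true ω) k) :=
  Measurable.add (f := fun ω => c.W n false ω k) (g := fun ω => c.W n true ω k)
    (c.sig_W n false k (h _)) (c.sig_W n true k (h _))

lemma Cfg.X_AM (hT : 0 < T) (hC : 0 ≤ C) (hf : ∀ i, Nice C (fun x => f x i))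
    (hg : ∀ i j, Nice C (fun x => g x i j)) (c : Cfg T f g x₀) (β : Bool) (k : ℕ) :
    k ≤ 2 * c.N → (∀ i, AM c.μ (fun ω => c.X β k ω i)) ∧
      Measurable[c.sig (c.past β k)] (c.X β k) := by
  induction k with
  | zero =>
    intro _
    have : c.X β 0 = fun _ => x₀ := funext (c.X0 β)
    rw [this]
    exact ⟨fun i => AM.const _, @measurable_const _ _ _ (c.sig _) _⟩
  | succ k ih =>
    intro hk
    obtain ⟨n, b, hnb, hs⟩ := c.fine_step β k (by omega)
    obtain ⟨h1, h2⟩ := ih (by omega)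
    have : c.X β (k + 1) = fun ω => milsteinStep f g (T / c.N / 2) (c.X β k ω) (c.W n b ω) :=
      funext hs
    rw [this]
    refine ⟨fun i => step_AM hC hf hg _ h1 (fun k => (c.gauss hT n b k).1) i, ?_⟩
    refine @step_meas d m f g C hf hg _ (c.sig _) _ _ _
      (h2.mono (c.sig_mono (c.past_mono β (Nat.le_succ k))) le_rfl)
      (fun l => c.sig_W n b l ?_)
    simp only [Cfg.past, Set.mem_ofPred_eq]
    omega

lemma Cfg.Xc_AM (hT : 0 < T) (hC : 0 ≤ C) (hf : ∀ i, Nice C (fun x => f x i))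
    (hg : ∀ i j, Nice C (fun x => g x i j)) (c : Cfg T f g x₀) (k : ℕ) :
    k ≤ c.N → (∀ i, AM c.μ (fun ω => c.Xc k ω i)) ∧
      Measurable[c.sig (c.pastc k)] (c.Xc k) := by
  induction k with
  | zero =>
    intro _
    have : c.Xc 0 = fun _ => x₀ := funext c.Xc0
    rw [this]
    exact ⟨fun i => AM.const _, @measurable_const _ _ _ (c.sig _) _⟩
  | succ k ih =>
    intro hk
    obtain ⟨h1, h2⟩ := ih (by omega)
    set n : Fin c.N := ⟨k, by omega⟩ with hn
    have : c.Xc (k + 1) = fun ω => milsteinStep f g (T / c.N) (c.Xc k ω)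
        (c.W n false ω + c.W n true ω) := funext (c.Xcs n)
    rw [this]
    refine ⟨fun i => step_AM hC hf hg _ h1 (fun k => (c.gauss hT n false k).1.add
      (c.gauss hT n true k).1) i, ?_⟩
    refine @step_meas d m f g C hf hg _ (c.sig _) _ _ _
      (h2.mono (c.sig_mono fun i hi => ?_) le_rfl)
      (fun l => c.sig_WW n l fun b => ?_)
    · exact Nat.lt_succ_of_lt hi
    · simp [Cfg.pastc, hn]

lemma X_mom (hT : 0 < T) (hC : 0 ≤ C) (hf : ∀ i, Nice C (fun x => f x i))
    (hg : ∀ i j, Nice C (fun x => g x i j)) (q : ℕ) :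
    ∃ K, ∀ (c : Cfg T f g x₀) (β : Bool), ∀ k ≤ 2 * c.N, ∀ i,
      ∫ ω, |c.X β k ω i| ^ q ∂c.μ ≤ K := by
  have hr : ∀ j : JJ T f g x₀, 0 < j.rr ∧ j.rr ≤ √T := fun j => ⟨j.1.r_pos hT, j.1.r_le hT⟩
  obtain ⟨K1, hK1, h1⟩ := OL.unif (fun a : Bool × Fin m => w_OL (f := f) (g := g) (x₀ := x₀) hT a.1 a.2)
    (2 * q + 2)
  obtain ⟨K2, hK2, h2⟩ := OL.unif (fun a : Bool × Fin m × Fin m =>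
    (ww_OL hr (fun k => w_OL (f := f) (g := g) (x₀ := x₀) hT a.1 k) (1 / 2) a.2.1 a.2.2).mono hr one_le_two)
    (2 * q + 2)
  obtain ⟨B, hB, hstep⟩ := mom_step hC hf hg (2 * q) (even_two_mul q) (√T) (K1 + K2) (by positivity)
  refine ⟨1 + Real.exp (B * (2 * T)) * (∑ i, |x₀ i| ^ (2 * q + 2) + 1), fun c β k hk i => ?_⟩
  refine (((c.X_AM hT hC hf hg β k hk).1 i).int_pow_le q ?_)
  have hrec := recur (fun k => ∑ i, ∫ ω, |c.X β k ω i| ^ (2 * q + 2) ∂c.μ) B (c.r ^ 2) 1 (2 * T)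
    (2 * c.N) hB (by positivity) (by
      have := c.N_r hT
      push_cast
      linarith) (by positivity) ?_ k hk
  · simp only [c.X0, integral_const, probReal_univ, one_smul] at hrec
    refine le_trans ?_ hrec
    have := Finset.single_le_sum (f := fun i => ∫ ω, |c.X β k ω i| ^ (2 * q + 2) ∂c.μ)
      (fun i _ => integral_nonneg fun ω => by positivity) (Finset.mem_univ i)
    linarith
  · intro k hk
    obtain ⟨n, b, hnb, hs⟩ := c.fine_step β k hk
    obtain ⟨a1, a2⟩ := c.X_AM hT hC hf hg β k hk.le
    refine hstep (c.sig (c.past β k)) (c.sig {i | i.1 = n ∧ i.2.1 = b}) c.μ c.r (1 / 2)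
      (c.X β k) (c.X β (k + 1)) (c.W n b) (c.r_pos hT) (c.r_le hT) (by norm_num) (by norm_num)
      a1 a2 (fun l => (c.gauss hT n b l).1) (fun l => c.sig_W n b l ⟨rfl, rfl⟩) (c.sig_indep ?_)
      (fun l => (c.gauss hT n b l).2.1) (fun l l' => ?_) (fun l => ?_) (fun l l' => ?_) (fun ω => ?_)
    · rw [Set.disjoint_left]
      rintro ⟨n', b', l⟩ hi ⟨rfl, rfl⟩
      simp only [Cfg.past, Set.mem_ofPred_eq] at hi
      simp only at hnb
      omega
    · refine Eq.trans ?_ (c.mean2 hT n b l l')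
      rw [one_div_mul_eq_div]
    · have := h1 (b, l) ⟨c, n⟩
      simp only [pow_one] at this
      exact this.trans (by linarith)
    · have := h2 (b, l, l') ⟨c, n⟩
      simp only [pow_one] at this
      refine le_trans (le_of_eq ?_) (this.trans (by linarith))
      congr 1; ext ω; congr 3; simp only [mul_comm]
    · rw [hs, c.r_sq hT]
      congr 1; ring

lemma Cfg.Wmean2 (hT : 0 < T) (c : Cfg T f g x₀) (n : Fin c.N) (k l : Fin m) :
    ∫ ω, ((c.W n false ω + c.W n true ω) k * (c.W n false ω + c.W n true ω) l
      - if k = l then 1 * c.r ^ 2 else 0) ∂c.μ = 0 := by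
  have i0 := fun β k => (c.gauss hT n β k).1
  have i1 : ∀ β, Integrable (fun ω => c.W n β ω k * c.W n β ω l
      - if k = l then c.r ^ 2 / 2 else 0) c.μ :=
    fun β => (((i0 β k).mul (i0 β l)).sub (AM.const _)).integrable
  have i2 := fun β => ((i0 β k).mul (i0 (!β) l)).integrable
  have e : ∀ ω, (c.W n false ω + c.W n true ω) k * (c.W n false ω + c.W n true ω) l
      - (if k = l then 1 * c.r ^ 2 else 0)
      = ((c.W n false ω k * c.W n false ω l - if k = l then c.r ^ 2 / 2 else 0)
        + (c.W n true ω k * c.W n true ω l - if k = l then c.r ^ 2 / 2 else 0))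
        + (c.W n false ω k * c.W n (!false) ω l + c.W n true ω k * c.W n (!true) ω l) := by
    intro ω
    simp only [Bool.not_false, Bool.not_true, Pi.add_apply]
    split_ifs <;> ring
  simp only [e]
  refine (integral_add ((i1 false).add (i1 true)) ((i2 false).add (i2 true))).trans ?_
  have a1 := (integral_add (i1 false) (i1 true)).trans
    (congrArg₂ (· + ·) (c.mean2 hT n false k l) (c.mean2 hT n true k l))
  have a2 := (integral_add (i2 false) (i2 true)).trans
    (congrArg₂ (· + ·) (c.mean3 hT n false k l) (c.mean3 hT n true k l))
  refine (congrArg₂ (· + ·) a1 a2).trans ?_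
  norm_num

lemma Cfg.Wmean1 (hT : 0 < T) (c : Cfg T f g x₀) (n : Fin c.N) (k : Fin m) :
    ∫ ω, (c.W n false ω k + c.W n true ω k) ∂c.μ = 0 := by
  rw [integral_add (c.gauss hT n false k).1.integrable (c.gauss hT n true k).1.integrable,
    (c.gauss hT n false k).2.1, (c.gauss hT n true k).2.1, add_zero]

lemma Xc_mom (hT : 0 < T) (hC : 0 ≤ C) (hf : ∀ i, Nice C (fun x => f x i))
    (hg : ∀ i j, Nice C (fun x => g x i j)) (q : ℕ) :
    ∃ K, ∀ (c : Cfg T f g x₀), ∀ k ≤ c.N, ∀ i, ∫ ω, |c.Xc k ω i| ^ q ∂c.μ ≤ K := by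
  have hr : ∀ j : JJ T f g x₀, 0 < j.rr ∧ j.rr ≤ √T := fun j => ⟨j.1.r_pos hT, j.1.r_le hT⟩
  have hW : ∀ k, OL (J := JJ T f g x₀) JJ.mu JJ.rr 1
      (fun j ω => (j.1.W j.2 false ω + j.1.W j.2 true ω) k) :=
    fun k => (w_OL hT false k).add (w_OL hT true k)
  obtain ⟨K1, hK1, h1⟩ := OL.unif hW (2 * q + 2)
  obtain ⟨K2, hK2, h2⟩ := OL.unif (fun a : Fin m × Fin m =>
    (ww_OL hr hW 1 a.1 a.2).mono hr one_le_two) (2 * q + 2)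
  obtain ⟨B, hB, hstep⟩ := mom_step hC hf hg (2 * q) (even_two_mul q) (√T) (K1 + K2) (by positivity)
  refine ⟨1 + Real.exp (B * T) * (∑ i, |x₀ i| ^ (2 * q + 2) + 1), fun c k hk i => ?_⟩
  refine (((c.Xc_AM hT hC hf hg k hk).1 i).int_pow_le q ?_)
  have hrec := recur (fun k => ∑ i, ∫ ω, |c.Xc k ω i| ^ (2 * q + 2) ∂c.μ) B (c.r ^ 2) 1 T
    c.N hB (by positivity) (c.N_r hT).le (by positivity) ?_ k hk
  · simp only [c.Xc0, integral_const, probReal_univ, one_smul] at hrec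
    refine le_trans ?_ hrec
    have := Finset.single_le_sum (f := fun i => ∫ ω, |c.Xc k ω i| ^ (2 * q + 2) ∂c.μ)
      (fun i _ => integral_nonneg fun ω => by positivity) (Finset.mem_univ i)
    linarith
  · intro k hk
    set n : Fin c.N := ⟨k, hk⟩ with hn
    obtain ⟨a1, a2⟩ := c.Xc_AM hT hC hf hg k hk.le
    refine hstep (c.sig (c.pastc k)) (c.sig {i | i.1 = n}) c.μ c.r 1
      (c.Xc k) (c.Xc (k + 1)) (fun ω => c.W n false ω + c.W n true ω) (c.r_pos hT) (c.r_le hT)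
      (by norm_num) (by norm_num)
      a1 a2 (fun l => (c.gauss hT n false l).1.add (c.gauss hT n true l).1)
      (fun l => c.sig_WW n l fun b => rfl) (c.sig_indep ?_)
      (fun l => c.Wmean1 hT n l) (fun l l' => c.Wmean2 hT n l l') (fun l => ?_) (fun l l' => ?_)
      (fun ω => ?_)
    · rw [Set.disjoint_left]
      rintro ⟨n', b', l⟩ hi rfl
      simp [Cfg.pastc, hn] at hi
    · have := h1 l ⟨c, n⟩
      simp only [pow_one] at this
      exact this.trans (by linarith)
    · have := h2 (l, l') ⟨c, n⟩
      simp only [pow_one] at this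
      refine le_trans (le_of_eq ?_) (this.trans (by linarith))
      congr 1; ext ω; congr 3; simp only [mul_comm]
    · rw [c.r_sq hT, one_mul]
      exact c.Xcs n ω

end Moments

section Final
variable {d m : ℕ} {T : ℝ} {f : (Fin d → ℝ) → Fin d → ℝ}
  {g : (Fin d → ℝ) → Fin d → Fin m → ℝ} {x₀ : Fin d → ℝ} {C : ℝ}

/-- information before the coarse step -/
def JJ.F (j : JJ T f g x₀) : MeasurableSpace j.Om := j.1.sig (j.1.pastc j.2)

/-- information of the coarse step -/
def JJ.H (j : JJ T f g x₀) : MeasurableSpace j.Om := j.1.sig {i | i.1 = j.2}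

lemma JJ.indFH (j : JJ T f g x₀) : Indep j.F j.H j.mu := by
  refine j.1.sig_indep ?_
  rw [Set.disjoint_left]
  rintro ⟨n', b', l⟩ hi h
  simp only [Set.mem_ofPred_eq] at h
  simp [Cfg.pastc, h] at hi

lemma gron (hT : 0 < T) (L : ℝ) (hL : 0 ≤ L) (k : ℕ)
    (D : ∀ c : Cfg T f g x₀, ℕ → c.Ω → Fin d → ℝ)
    (hAM : ∀ c, ∀ n ≤ c.N, ∀ i, AM c.μ (fun ω => D c n ω i))
    (hm : ∀ c, ∀ n ≤ c.N, Measurable[c.sig (c.pastc n)] (D c n))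
    (h0 : ∀ c ω i, D c 0 ω i = 0)
    (φ : ∀ j : JJ T f g x₀, Fin d → j.Om → ℝ) (γ : ∀ j : JJ T f g x₀, Fin d → Fin m → j.Om → ℝ)
    (φm : ∀ j i, Measurable[j.F] (φ j i)) (γm : ∀ j i l, Measurable[j.F] (γ j i l))
    (φb : ∀ j i ω, |φ j i ω| ≤ L * ‖D j.1 j.2 ω‖) (γb : ∀ j i l ω, |γ j i l ω| ≤ L * ‖D j.1 j.2 ω‖)
    (hrem : ∀ i, Rem JJ.F JJ.mu JJ.rr k (fun j ω => D j.1 (j.2 + 1) ω i - D j.1 j.2 ω i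
      - φ j i ω * j.rr ^ 2 - ∑ l, γ j i l ω * (j.1.W j.2 false ω l + j.1.W j.2 true ω l))) :
    ∀ q : ℕ, ∃ K, ∀ c, ∀ n ≤ c.N, ∀ i, ∫ ω, |D c n ω i / c.r ^ k| ^ q ∂c.μ ≤ K := by
  intro q
  have hW : ∀ l, OL (J := JJ T f g x₀) JJ.mu JJ.rr 1
      (fun j ω => j.1.W j.2 false ω l + j.1.W j.2 true ω l) :=
    fun k => (w_OL hT false k).add (w_OL hT true k)
  choose u v hu hv huv using hrem
  obtain ⟨K1, hK1, b1⟩ := OL.unif hW (2 * q + 2)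
  obtain ⟨K2, hK2, b2⟩ := OL.unif hu (2 * q + 2)
  obtain ⟨K3, hK3, b3⟩ := OL.unif (fun i => (hv i).1) (2 * q + 2)
  obtain ⟨B, hB, hstep⟩ := vstep d (Fin m) (2 * q) (even_two_mul q) (√T) L (K1 + K2 + K3) hL
    (by positivity)
  refine ⟨1 + Real.exp (B * T), fun c n hn i => ?_⟩
  refine ((hAM c n hn i).div _).int_pow_le q ?_
  have hr := c.r_pos hT
  set e := c.r ^ k with he
  have he0 : 0 < e := by positivity
  have hrec := recur (fun n => ∑ i, ∫ ω, |D c n ω i| ^ (2 * q + 2) ∂c.μ) B (c.r ^ 2)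
    (e ^ (2 * q + 2)) T c.N hB (by positivity) (c.N_r hT).le (by positivity) ?_ n hn
  · simp only [h0, abs_zero, zero_pow (show 2 * q + 2 ≠ 0 by omega), integral_zero,
      Finset.sum_const_zero, zero_add] at hrec
    have h1 := Finset.single_le_sum (f := fun i => ∫ ω, |D c n ω i| ^ (2 * q + 2) ∂c.μ)
      (fun i _ => integral_nonneg fun ω => by positivity) (Finset.mem_univ i)
    have h2 : 0 < e ^ (2 * q + 2) := by positivity
    simp only [abs_div, abs_of_pos he0, div_pow, integral_div]
    rw [div_le_iff₀ h2]
    linarith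
  · intro n hn
    set j : JJ T f g x₀ := ⟨c, ⟨n, hn⟩⟩ with hj
    have hFle : j.F ≤ c.mΩ := c.sig_le _
    have hDF : Measurable[j.F] (D c n) := hm c n hn.le
    have hscale : ∀ (Y : c.Ω → ℝ) (l : ℕ) (K : ℝ), K ≤ K1 + K2 + K3 →
        ∫ ω, |Y ω / c.r ^ (k + l)| ^ (2 * q + 2) ∂c.μ ≤ K →
        ∫ ω, |Y ω / c.r ^ l| ^ (2 * q + 2) ∂c.μ ≤ (K1 + K2 + K3) * e ^ (2 * q + 2) := by
      intro Y l K hK h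
      have h2 : 0 < e ^ (2 * q + 2) := by positivity
      rw [← div_le_iff₀ h2, ← integral_div]
      refine le_trans (le_of_eq ?_) (h.trans hK)
      congr 1; ext ω
      rw [← abs_of_pos he0, ← div_pow, ← abs_div, he, div_div, ← pow_add, add_comm l]
    refine hstep j.F (fun _ => j.H) c.μ c.r e (D c n) (D c (n + 1)) (φ j) (γ j)
      (fun l ω => c.W ⟨n, hn⟩ false ω l + c.W ⟨n, hn⟩ true ω l) (fun i => u i j) (fun i => v i j)
      hr (c.r_le hT) he0.le (hAM c n hn.le) (fun i => (φm j i).mono hFle le_rfl)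
      (fun i l => (γm j i l).mono hFle le_rfl)
      (fun i ω => (φb j i ω).trans ?_) (fun i l ω => (γb j i l ω).trans ?_)
      (fun l => (hW l).1 j) (fun l => c.Wmean1 hT ⟨n, hn⟩ l) (fun l => ?_)
      (fun i => (measurable_pi_apply i).comp hDF) (γm j) (fun l => c.sig_WW ⟨n, hn⟩ l fun b => rfl)
      (fun _ => j.indFH) (fun i => (hu i).1 j) (fun i => (hv i).1.1 j) (fun i => ?_) (fun i => ?_)
      (fun i => ?_) (fun i ω => ?_)
    · exact mul_le_mul_of_nonneg_left (by linarith) hL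
    · exact mul_le_mul_of_nonneg_left (by linarith) hL
    · have := b1 l j
      simp only [pow_one] at this
      exact this.trans (by linarith)
    · exact (hv i).2 j _ (Measurable.pow_const ((measurable_pi_apply i).comp hDF) _)
        ((hAM c n hn.le i).pow _)
    · exact hscale _ 2 K2 (by linarith) (b2 i j)
    · have := hscale (v i j) 1 K3 (by linarith) (b3 i j)
      simpa only [pow_one] using this
    · have := huv i j ω
      simp only [hj] at this ⊢
      linear_combination this

variable (x₀) in
lemma setup (hT : 0 < T) (hC : 0 ≤ C) (hf : ∀ i, Nice C (fun x => f x i))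
    (hg : ∀ i j, Nice C (fun x => g x i j)) :
    Setup (J := JJ T f g x₀) f g (√T) JJ.F JJ.H
      (fun β j => j.1.sig (j.1.past β (2 * j.2 + 1)))
      (fun β j => j.1.sig {i | i.1 = j.2 ∧ i.2.1 = β}) JJ.mu JJ.rr
      (fun β j => j.1.W j.2 β) (fun β j => j.1.X β (2 * j.2)) (fun β j => j.1.X β (2 * j.2 + 1))
      (fun β j => j.1.X β (2 * j.2 + 2)) (fun j => j.1.Xc j.2) (fun j => j.1.Xc (j.2 + 1)) where
  hr j := ⟨j.1.r_pos hT, j.1.r_le hT⟩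
  hFA β j := j.1.sig_mono ((j.1.pastc_le_past β _).trans (j.1.past_mono β (Nat.le_succ _)))
  indA β j := by
    refine j.1.sig_indep ?_
    rw [Set.disjoint_left]
    rintro ⟨n', b', l⟩ hi ⟨h1, h2⟩
    simp only at h1 h2
    subst h1 h2
    simp [Cfg.past] at hi
  indF j := j.indFH
  wH β j k := j.1.sig_W _ _ _ rfl
  wB β j k := j.1.sig_W _ _ _ ⟨rfl, rfl⟩
  wA β j k := j.1.sig_W _ _ _ (by simp [Cfg.past])
  xF β j := ((j.1.X_AM hT hC hf hg β (2 * j.2) (by have := j.2.2; omega)).2).mono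
    (j.1.sig_mono (j.1.past_le_pastc β _)) le_rfl
  yA β j := (j.1.X_AM hT hC hf hg β (2 * j.2 + 1) (by have := j.2.2; omega)).2
  xcF j := (j.1.Xc_AM hT hC hf hg j.2 j.2.2.le).2
  x0 β i := ⟨fun j => (j.1.X_AM hT hC hf hg β (2 * j.2) (by have := j.2.2; omega)).1 i, fun q => by
    obtain ⟨K, hK⟩ := X_mom (x₀ := x₀) hT hC hf hg q
    refine ⟨K, fun j => ?_⟩
    simpa using hK j.1 β (2 * j.2) (by have := j.2.2; omega) i⟩
  y0 β i := ⟨fun j => (j.1.X_AM hT hC hf hg β (2 * j.2 + 1) (by have := j.2.2; omega)).1 i,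
    fun q => by
    obtain ⟨K, hK⟩ := X_mom (x₀ := x₀) hT hC hf hg q
    refine ⟨K, fun j => ?_⟩
    simpa using hK j.1 β (2 * j.2 + 1) (by have := j.2.2; omega) i⟩
  xc0 i := ⟨fun j => (j.1.Xc_AM hT hC hf hg j.2 j.2.2.le).1 i, fun q => by
    obtain ⟨K, hK⟩ := Xc_mom (x₀ := x₀) hT hC hf hg q
    refine ⟨K, fun j => ?_⟩
    simpa using hK j.1 j.2 j.2.2.le i⟩
  w1 β k := w_OL hT β k
  mean1 β j k := (j.1.gauss hT j.2 β k).2.1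
  mean2 β j k l := j.1.mean2 hT j.2 β k l
  mean3 β j k l := j.1.mean3 hT j.2 β k l
  ystep β j ω := by rw [j.1.r_sq hT]; exact j.1.Xodd β j.2 ω
  zstep β j ω := by rw [j.1.r_sq hT]; exact j.1.Xeven β j.2 ω
  zcstep j ω := by rw [j.1.r_sq hT]; exact j.1.Xcs j.2 ω

end Final

section Interp
variable {d : ℕ}

lemma plInterp_sub (s t : ℝ) (X Y : ℕ → Fin d → ℝ) :
    plInterp s X t - plInterp s Y t = plInterp s (fun k => X k - Y k) t := by
  ext i
  simp only [plInterp, Pi.add_apply, Pi.sub_apply, Pi.smul_apply, smul_eq_mul]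
  ring

lemma plInterp_avg (s t : ℝ) (X Y : ℕ → Fin d → ℝ) :
    (2⁻¹ : ℝ) • (plInterp s X t + plInterp s Y t)
      = plInterp s (fun k => (fun i => 1 / 2 * (X k i + Y k i))) t := by
  ext i
  simp only [plInterp, Pi.add_apply, Pi.sub_apply, Pi.smul_apply, smul_eq_mul]
  ring

/-- refinement of a coarse path to the fine grid -/
noncomputable def refine2 (X : ℕ → Fin d → ℝ) (k : ℕ) : Fin d → ℝ :=
  fun i => 1 / 2 * (X (k / 2) i + X ((k + 1) / 2) i)

lemma plInterp_refine (δ t : ℝ) (hδ : 0 < δ) (X : ℕ → Fin d → ℝ) :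
    plInterp δ X t = plInterp (δ / 2) (refine2 X) t := by
  have h1 : ⌊t / (δ / 2)⌋.toNat = ⌊t / (δ / 2)⌋₊ := Int.floor_toNat _
  have h2 : ⌊t / δ⌋.toNat = ⌊t / (δ / 2)⌋₊ / 2 := by
    rw [Int.floor_toNat]
    rw [← Nat.floor_div_ofNat]
    congr 1
    field_simp
  simp only [plInterp, h1, h2]
  set k := ⌊t / (δ / 2)⌋₊
  ext i
  rcases Nat.even_or_odd' k with ⟨n, hn | hn⟩
  · have e1 : k / 2 = n := by omega
    have e2 : (k + 1) / 2 = n := by omega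
    have e3 : (k + 1 + 1) / 2 = n + 1 := by omega
    simp only [refine2, Pi.add_apply, Pi.sub_apply, Pi.smul_apply, smul_eq_mul, e1, e2, e3]
    rw [hn]
    push_cast
    field_simp
    ring
  · have e1 : k / 2 = n := by omega
    have e2 : (k + 1) / 2 = n + 1 := by omega
    have e3 : (k + 1 + 1) / 2 = n + 1 := by omega
    simp only [refine2, Pi.add_apply, Pi.sub_apply, Pi.smul_apply, smul_eq_mul, e1, e2, e3]
    rw [hn]
    push_cast
    field_simp
    ring

lemma plInterp_le (s t : ℝ) (hs : 0 < s) (ht : 0 ≤ t) (M : ℕ) (htM : t ≤ M * s) :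
    ∃ k ≤ M, ∃ l ≤ M, ∀ E : ℕ → Fin d → ℝ, ‖plInterp s E t‖ ≤ max ‖E k‖ ‖E l‖ := by
  have h1 : ⌊t / s⌋.toNat = ⌊t / s⌋₊ := Int.floor_toNat _
  have h0 : 0 ≤ t / s := by positivity
  have hk1 : (⌊t / s⌋₊ : ℝ) ≤ t / s := Nat.floor_le h0
  have hk2 : t / s < ⌊t / s⌋₊ + 1 := Nat.lt_floor_add_one _
  have hkM : ⌊t / s⌋₊ ≤ M := Nat.floor_le_of_le ((div_le_iff₀ hs).2 htM)
  simp only [plInterp, h1]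
  set k := ⌊t / s⌋₊
  have hl : (t - k * s) / s = t / s - k := by field_simp
  simp only [hl]
  rcases hkM.lt_or_eq with h | h
  · refine ⟨k, hkM, k + 1, h, fun E => ?_⟩
    set lam := t / s - k
    have l0 : 0 ≤ lam := by linarith
    have l1 : lam ≤ 1 := by linarith
    calc _ = ‖(1 - lam) • E k + lam • E (k + 1)‖ := by congr 1; module
      _ ≤ ‖(1 - lam) • E k‖ + ‖lam • E (k + 1)‖ := norm_add_le _ _
      _ = (1 - lam) * ‖E k‖ + lam * ‖E (k + 1)‖ := by
          rw [norm_smul, norm_smul, Real.norm_of_nonneg l0, Real.norm_of_nonneg (by linarith)]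
      _ ≤ (1 - lam) * max ‖E k‖ ‖E (k + 1)‖ + lam * max ‖E k‖ ‖E (k + 1)‖ := by
          gcongr
          · exact le_max_left _ _
          · exact le_max_right _ _
      _ = _ := by ring
  · refine ⟨k, hkM, k, hkM, fun E => ?_⟩
    have : t / s ≤ k := by rw [h]; exact (div_le_iff₀ hs).2 htM
    have : t / s - k = 0 := by linarith
    simp [this]

lemma rpow_norm_le (p : ℝ) (hp : 0 ≤ p) (q : ℕ) (hq : p ≤ (q + 1 : ℕ)) (ρ : ℝ) (hρ : 0 < ρ)
    (x : Fin d → ℝ) : ‖x‖ ^ p ≤ ρ ^ p * (1 + ∑ i, |x i / ρ| ^ (q + 1)) := by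
  have h1 : ‖x‖ = ρ * ‖(fun i => x i / ρ)‖ := by
    have : x = ρ • (fun i => x i / ρ) := by
      ext i; simp only [Pi.smul_apply, smul_eq_mul]; field_simp
    conv_lhs => rw [this, norm_smul, Real.norm_of_nonneg hρ.le]
  rw [h1, Real.mul_rpow hρ.le (norm_nonneg _)]
  refine mul_le_mul_of_nonneg_left ?_ (by positivity)
  have h2 := norm_pow_le_sum q (fun i => x i / ρ)
  set y := ‖(fun i => x i / ρ)‖
  have hy : 0 ≤ y := norm_nonneg _
  have h3 : y ^ p ≤ 1 + y ^ (q + 1) := by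
    rcases le_total y 1 with h | h
    · have := Real.rpow_le_one hy h hp
      have : 0 ≤ y ^ (q + 1) := by positivity
      linarith
    · have := Real.rpow_le_rpow_of_exponent_le h hq
      rw [Real.rpow_natCast] at this
      linarith
  linarith

lemma interp_bound {Ω : Type} [MeasurableSpace Ω] {μ : Measure Ω} [IsProbabilityMeasure μ]
    (p : ℝ) (hp : 0 ≤ p) (q : ℕ) (hq : p ≤ (q + 1 : ℕ)) (ρ : ℝ) (hρ : 0 < ρ)
    (s t : ℝ) (hs : 0 < s) (ht : 0 ≤ t) (M : ℕ) (htM : t ≤ M * s) (K : ℝ)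
    (E : ℕ → Ω → Fin d → ℝ) (hE : ∀ k ≤ M, ∀ i, AM μ (fun ω => E k ω i))
    (hK : ∀ k ≤ M, ∀ i, ∫ ω, |E k ω i / ρ| ^ (q + 1) ∂μ ≤ K) :
    ∫ ω, ‖plInterp s (fun k => E k ω) t‖ ^ p ∂μ ≤ 2 * (1 + d * K) * ρ ^ p := by
  obtain ⟨k, hk, l, hl, hkl⟩ := plInterp_le (d := d) s t hs ht M htM
  have hInt : ∀ k ≤ M, Integrable (fun ω => ρ ^ p * (1 + ∑ i, |E k ω i / ρ| ^ (q + 1))) μ :=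
    fun k hk => ((integrable_const 1).add (integrable_finsetSum _
      fun i _ => ((hE k hk i).div ρ).2 (q + 1))).const_mul _
  have hb : ∀ k ≤ M, ∫ ω, ρ ^ p * (1 + ∑ i, |E k ω i / ρ| ^ (q + 1)) ∂μ
      ≤ ρ ^ p * (1 + d * K) := by
    intro k hk
    rw [integral_const_mul, integral_add (integrable_const 1) (integrable_finsetSum _
      fun i _ => ((hE k hk i).div ρ).2 (q + 1)), integral_finsetSum _
      fun i _ => ((hE k hk i).div ρ).2 (q + 1)]
    refine mul_le_mul_of_nonneg_left ?_ (by positivity)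
    have := Finset.sum_le_sum fun i (_ : i ∈ Finset.univ) => hK k hk i
    simp only [integral_const, probReal_univ, one_smul]
    simpa using this
  have := integral_mono_of_nonneg (μ := μ) (f := fun ω => ‖plInterp s (fun k => E k ω) t‖ ^ p)
    (Filter.Eventually.of_forall fun ω => by positivity) ((hInt k hk).add (hInt l hl))
    (Filter.Eventually.of_forall fun ω => by
      have h1 := hkl (fun k => E k ω)
      have h2 := Real.rpow_le_rpow (norm_nonneg _) h1 hp
      have a1 := rpow_norm_le p hp q hq ρ hρ (E k ω)
      have a2 := rpow_norm_le p hp q hq ρ hρ (E l ω)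
      have b1 : 0 ≤ ‖E k ω‖ ^ p := by positivity
      have b2 : 0 ≤ ‖E l ω‖ ^ p := by positivity
      simp only [Pi.add_apply]
      rcases max_choice ‖E k ω‖ ‖E l ω‖ with h | h <;> simp only [h] at h2 <;> linarith)
  simp only [Pi.add_apply] at this
  rw [integral_add (hInt k hk) (hInt l hl)] at this
  have c1 := hb k hk
  have c2 := hb l hl
  linarith

end Interp

section Final
variable {d m : ℕ} {T : ℝ} {f : (Fin d → ℝ) → Fin d → ℝ}
  {g : (Fin d → ℝ) → Fin d → Fin m → ℝ} {x₀ : Fin d → ℝ} {C : ℝ}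

lemma grid1 (x₀ : Fin d → ℝ) (hT : 0 < T) (hC : 0 ≤ C) (hf : ∀ i, Nice C (fun x => f x i))
    (hg : ∀ i j, Nice C (fun x => g x i j)) (β : Bool) :
    ∀ q : ℕ, ∃ K, ∀ c : Cfg T f g x₀, ∀ n ≤ c.N, ∀ i,
      ∫ ω, |(c.X β (2 * n) ω i - c.Xc n ω i) / c.r ^ 1| ^ q ∂c.μ ≤ K := by
  have S := setup x₀ hT hC hf hg
  refine gron hT C hC 1 (fun c n ω i => c.X β (2 * n) ω i - c.Xc n ω i)
    (fun c n hn i => ((c.X_AM hT hC hf hg β (2 * n) (by omega)).1 i).sub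
      ((c.Xc_AM hT hC hf hg n hn).1 i)) (fun c n hn => ?_) (fun c ω i => ?_)
    (fun j i ω => f (j.1.X β (2 * j.2) ω) i - f (j.1.Xc j.2 ω) i)
    (fun j i k ω => g (j.1.X β (2 * j.2) ω) i k - g (j.1.Xc j.2 ω) i k)
    (fun j i => ?_) (fun j i k => ?_) (fun j i ω => ?_) (fun j i k ω => ?_)
    (fun i => S.level1 hC hf hg β i)
  · exact Measurable.sub (((c.X_AM hT hC hf hg β (2 * n) (by omega)).2).mono
      (c.sig_mono (c.past_le_pastc β _)) le_rfl) (c.Xc_AM hT hC hf hg n hn).2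
  · simp [c.X0, c.Xc0]
  · exact Measurable.sub ((hf i).diff.continuous.measurable.comp (S.xF β j))
      ((hf i).diff.continuous.measurable.comp (S.xcF j))
  · exact Measurable.sub ((hg i k).diff.continuous.measurable.comp (S.xF β j))
      ((hg i k).diff.continuous.measurable.comp (S.xcF j))
  · exact (hf i).lip _ _
  · exact (hg i k).lip _ _

lemma h1OL (x₀ : Fin d → ℝ) (hT : 0 < T) (hC : 0 ≤ C) (hf : ∀ i, Nice C (fun x => f x i))
    (hg : ∀ i j, Nice C (fun x => g x i j)) (β : Bool) (i : Fin d) :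
    OL (J := JJ T f g x₀) JJ.mu JJ.rr 1
      (fun j ω => j.1.X β (2 * j.2) ω i - j.1.Xc j.2 ω i) :=
  ⟨fun j => ((j.1.X_AM hT hC hf hg β (2 * j.2) (by have := j.2.2; omega)).1 i).sub
      ((j.1.Xc_AM hT hC hf hg j.2 j.2.2.le).1 i), fun q => by
    obtain ⟨K, hK⟩ := grid1 x₀ hT hC hf hg β q
    exact ⟨K, fun j => hK j.1 j.2 j.2.2.le i⟩⟩

lemma grid2 (x₀ : Fin d → ℝ) (hT : 0 < T) (hC : 0 ≤ C) (hf : ∀ i, Nice C (fun x => f x i))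
    (hg : ∀ i j, Nice C (fun x => g x i j)) :
    ∀ q : ℕ, ∃ K, ∀ c : Cfg T f g x₀, ∀ n ≤ c.N, ∀ i,
      ∫ ω, |(1 / 2 * (c.X false (2 * n) ω i + c.X true (2 * n) ω i) - c.Xc n ω i) / c.r ^ 2| ^ q
        ∂c.μ ≤ K := by
  have S := setup x₀ hT hC hf hg
  have hxb : ∀ j : JJ T f g x₀, Measurable[j.F] (fun ω => (fun i =>
      1 / 2 * (j.1.X false (2 * j.2) ω i + j.1.X true (2 * j.2) ω i) : Fin d → ℝ)) := fun j =>
    @measurable_pi_lambda _ _ _ j.F _ _ fun i => Measurable.const_mul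
      (Measurable.add ((measurable_pi_apply i).comp (S.xF false j))
        ((measurable_pi_apply i).comp (S.xF true j))) _
  refine gron hT C hC 2 (fun c n ω i => 1 / 2 * (c.X false (2 * n) ω i + c.X true (2 * n) ω i)
      - c.Xc n ω i)
    (fun c n hn i => ((AM.const (1 / 2)).mul
      (((c.X_AM hT hC hf hg false (2 * n) (by omega)).1 i).add
      ((c.X_AM hT hC hf hg true (2 * n) (by omega)).1 i))).sub
      ((c.Xc_AM hT hC hf hg n hn).1 i)) (fun c n hn => ?_) (fun c ω i => ?_)
    (fun j i ω => f (fun i => 1 / 2 * (j.1.X false (2 * j.2) ω i + j.1.X true (2 * j.2) ω i)) i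
      - f (j.1.Xc j.2 ω) i)
    (fun j i k ω => g (fun i => 1 / 2 * (j.1.X false (2 * j.2) ω i + j.1.X true (2 * j.2) ω i)) i k
      - g (j.1.Xc j.2 ω) i k)
    (fun j i => ?_) (fun j i k => ?_) (fun j i ω => ?_) (fun j i k ω => ?_)
    (fun i => S.level2 hC hf hg (h1OL x₀ hT hC hf hg) i)
  · have hX : ∀ β, Measurable[c.sig (c.pastc n)] (c.X β (2 * n)) := fun β =>
      ((c.X_AM hT hC hf hg β (2 * n) (by omega)).2).mono (c.sig_mono (c.past_le_pastc β _)) le_rfl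
    have hXc := (c.Xc_AM hT hC hf hg n hn).2
    exact @measurable_pi_lambda _ _ _ (c.sig (c.pastc n)) _ _ fun i => Measurable.sub
      (Measurable.const_mul (Measurable.add ((measurable_pi_apply i).comp (hX false))
        ((measurable_pi_apply i).comp (hX true))) _) ((measurable_pi_apply i).comp hXc)
  · simp only [mul_zero, c.X0, c.Xc0]; ring
  · exact Measurable.sub ((hf i).diff.continuous.measurable.comp (hxb j))
      ((hf i).diff.continuous.measurable.comp (S.xcF j))
  · exact Measurable.sub ((hg i k).diff.continuous.measurable.comp (hxb j))
      ((hg i k).diff.continuous.measurable.comp (S.xcF j))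
  · exact (hf i).lip _ _
  · exact (hg i k).lip _ _

lemma h2OL (x₀ : Fin d → ℝ) (hT : 0 < T) (hC : 0 ≤ C) (hf : ∀ i, Nice C (fun x => f x i))
    (hg : ∀ i j, Nice C (fun x => g x i j)) (i : Fin d) :
    OL (J := JJ T f g x₀) JJ.mu JJ.rr 2
      (fun j ω => 1 / 2 * (j.1.X false (2 * j.2) ω i + j.1.X true (2 * j.2) ω i)
        - j.1.Xc j.2 ω i) :=
  ⟨fun j => ((AM.const (1 / 2)).mul
      (((j.1.X_AM hT hC hf hg false (2 * j.2) (by have := j.2.2; omega)).1 i).add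
      ((j.1.X_AM hT hC hf hg true (2 * j.2) (by have := j.2.2; omega)).1 i))).sub
      ((j.1.Xc_AM hT hC hf hg j.2 j.2.2.le).1 i), fun q => by
    obtain ⟨K, hK⟩ := grid2 x₀ hT hC hf hg q
    exact ⟨K, fun j => hK j.1 j.2 j.2.2.le i⟩⟩

/-- fine-grid bound, first difference -/
lemma fine1 (x₀ : Fin d → ℝ) (hT : 0 < T) (hC : 0 ≤ C) (hf : ∀ i, Nice C (fun x => f x i))
    (hg : ∀ i j, Nice C (fun x => g x i j)) (q : ℕ) :
    ∃ K, 0 ≤ K ∧ ∀ c : Cfg T f g x₀, ∀ k ≤ 2 * c.N, ∀ i,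
      ∫ ω, |(c.X false k ω i - c.X true k ω i) / c.r| ^ q ∂c.μ ≤ K := by
  obtain ⟨K1, h1⟩ := grid1 x₀ hT hC hf hg false q
  obtain ⟨K2, h2⟩ := grid1 x₀ hT hC hf hg true q
  choose K3 h3 using fun i => ((setup x₀ hT hC hf hg).mid1 hC hf hg (h1OL x₀ hT hC hf hg) i).2 q
  refine ⟨2 ^ q * (|K1| + |K2|) + ∑ i, |K3 i|, by positivity, fun c k hk i => ?_⟩
  have hK3 : K3 i ≤ ∑ i, |K3 i| := (le_abs_self _).trans
    (Finset.single_le_sum (f := fun i => |K3 i|) (fun i _ => abs_nonneg _) (Finset.mem_univ i))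
  have hK3' : 0 ≤ ∑ i, |K3 i| := by positivity
  rcases Nat.even_or_odd' k with ⟨n, hn | hn⟩
  · subst hn
    have hn : n ≤ c.N := by omega
    have b1 := h1 c n hn i
    have b2 := h2 c n hn i
    simp only [pow_one] at b1 b2
    have a1 := (((c.X_AM hT hC hf hg false (2 * n) (by omega)).1 i).sub
      ((c.Xc_AM hT hC hf hg n hn).1 i)).div c.r
    have a2 := (((c.X_AM hT hC hf hg true (2 * n) (by omega)).1 i).sub
      ((c.Xc_AM hT hC hf hg n hn).1 i)).div c.r
    have := integral_mono_of_nonneg (μ := c.μ)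
      (f := fun ω => |(c.X false (2 * n) ω i - c.X true (2 * n) ω i) / c.r| ^ q)
      (Filter.Eventually.of_forall fun ω => by positivity)
      (((a1.2 q).add (a2.2 q)).const_mul (2 ^ q))
      (Filter.Eventually.of_forall fun ω => by
        simp only [Pi.add_apply]
        have e : (c.X false (2 * n) ω i - c.X true (2 * n) ω i) / c.r
          = (c.X false (2 * n) ω i - c.Xc n ω i) / c.r
            - (c.X true (2 * n) ω i - c.Xc n ω i) / c.r := by ring
        rw [e]
        generalize (c.X false (2 * n) ω i - c.Xc n ω i) / c.r = u
        generalize (c.X true (2 * n) ω i - c.Xc n ω i) / c.r = v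
        have h : |u - v| ≤ 2 * max |u| |v| := by
          have := abs_sub u v
          have := le_max_left |u| |v|
          have := le_max_right |u| |v|
          linarith
        calc |u - v| ^ q ≤ (2 * max |u| |v|) ^ q := pow_le_pow_left₀ (abs_nonneg _) h _
          _ = 2 ^ q * (max |u| |v|) ^ q := mul_pow _ _ _
          _ ≤ 2 ^ q * (|u| ^ q + |v| ^ q) := by
            refine mul_le_mul_of_nonneg_left ?_ (by positivity)
            have : 0 ≤ |u| ^ q := by positivity
            have : 0 ≤ |v| ^ q := by positivity
            rcases max_choice |u| |v| with h | h <;> rw [h] <;> linarith)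
    rw [integral_const_mul] at this
    simp only [Pi.add_apply] at this
    rw [integral_add (a1.2 q) (a2.2 q)] at this
    refine this.trans ?_
    have : (2 : ℝ) ^ q * (∫ ω, |(c.X false (2 * n) ω i - c.Xc n ω i) / c.r| ^ q ∂c.μ
      + ∫ ω, |(c.X true (2 * n) ω i - c.Xc n ω i) / c.r| ^ q ∂c.μ) ≤ 2 ^ q * (|K1| + |K2|) :=
      mul_le_mul_of_nonneg_left (add_le_add (b1.trans (le_abs_self _))
        (b2.trans (le_abs_self _))) (by positivity)
    linarith
  · subst hn
    have b := h3 i ⟨c, ⟨n, by omega⟩⟩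
    simp only [pow_one] at b
    have : 0 ≤ 2 ^ q * (|K1| + |K2|) := by positivity
    exact b.trans (by linarith)

/-- fine-grid bound, second difference -/
lemma fine2 (x₀ : Fin d → ℝ) (hT : 0 < T) (hC : 0 ≤ C) (hf : ∀ i, Nice C (fun x => f x i))
    (hg : ∀ i j, Nice C (fun x => g x i j)) (q : ℕ) :
    ∃ K, 0 ≤ K ∧ ∀ c : Cfg T f g x₀, ∀ k ≤ 2 * c.N, ∀ i,
      ∫ ω, |(1 / 2 * (c.X false k ω i + c.X true k ω i)
        - refine2 (fun k => c.Xc k ω) k i) / c.r ^ 2| ^ q ∂c.μ ≤ K := by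
  obtain ⟨K1, h1⟩ := grid2 x₀ hT hC hf hg q
  choose K3 h3 using fun i => ((setup x₀ hT hC hf hg).mid2 hC hf hg (h1OL x₀ hT hC hf hg)
    (h2OL x₀ hT hC hf hg) i).2 q
  refine ⟨|K1| + ∑ i, |K3 i|, by positivity, fun c k hk i => ?_⟩
  have hK3 : K3 i ≤ ∑ i, |K3 i| := (le_abs_self _).trans
    (Finset.single_le_sum (f := fun i => |K3 i|) (fun i _ => abs_nonneg _) (Finset.mem_univ i))
  have hK3' : 0 ≤ ∑ i, |K3 i| := by positivity
  have hK1 := le_abs_self K1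
  have hK1' := abs_nonneg K1
  rcases Nat.even_or_odd' k with ⟨n, hn | hn⟩
  · subst hn
    have b := h1 c n (by omega) i
    refine (le_of_eq ?_).trans (b.trans (by linarith))
    congr 1; ext ω
    have e1 : 2 * n / 2 = n := by omega
    have e2 : (2 * n + 1) / 2 = n := by omega
    simp only [refine2, e1, e2]
    congr 3; ring
  · subst hn
    have b := h3 i ⟨c, ⟨n, by omega⟩⟩
    refine (le_of_eq ?_).trans (b.trans (by linarith))
    have e1 : (2 * n + 1) / 2 = n := by omega
    have e2 : (2 * n + 1 + 1) / 2 = n + 1 := by omega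
    simp only [refine2, e1, e2]

lemma final (x₀ : Fin d → ℝ) (hT : 0 < T) (hC : 0 ≤ C) (hf : ∀ i, Nice C (fun x => f x i))
    (hg : ∀ i j, Nice C (fun x => g x i j)) (p : ℝ) (hp : 2 ≤ p) :
    ∃ K, ∀ c : Cfg T f g x₀, ∀ t ∈ Set.Icc (0 : ℝ) T,
      (∫ ω, ‖plInterp (T / c.N / 2) (fun k => c.X false k ω) t
          - plInterp (T / c.N / 2) (fun k => c.X true k ω) t‖ ^ p ∂c.μ)
        ≤ K * (T / c.N) ^ (p / 2) ∧
      (∫ ω, ‖(2⁻¹ : ℝ) • (plInterp (T / c.N / 2) (fun k => c.X false k ω) t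
            + plInterp (T / c.N / 2) (fun k => c.X true k ω) t)
          - plInterp (T / c.N) (fun k => c.Xc k ω) t‖ ^ p ∂c.μ)
        ≤ K * (T / c.N) ^ p := by
  obtain ⟨q, hq⟩ := exists_nat_ge p
  have hq' : p ≤ (q + 1 : ℕ) := by push_cast; linarith
  obtain ⟨K1, hK1, h1⟩ := fine1 x₀ hT hC hf hg (q + 1)
  obtain ⟨K2, hK2, h2⟩ := fine2 x₀ hT hC hf hg (q + 1)
  refine ⟨2 * (1 + d * (K1 + K2)), fun c t ht => ?_⟩
  have hδ : 0 < T / c.N := c.step_pos hT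
  have hr := c.r_pos hT
  have hN : (c.N : ℝ) ≠ 0 := by have := c.hN; positivity
  have htM : t ≤ ((2 * c.N : ℕ) : ℝ) * (T / c.N / 2) := by
    refine ht.2.trans (le_of_eq ?_)
    push_cast
    field_simp
  have e1 : (T / c.N) ^ (p / 2) = c.r ^ p := by
    rw [← c.r_sq hT, ← Real.rpow_natCast, ← Real.rpow_mul hr.le]
    congr 1
    push_cast
    ring
  have e2 : (T / c.N) ^ p = (c.r ^ 2) ^ p := by rw [c.r_sq hT]
  rw [e1, e2]
  constructor
  · simp only [plInterp_sub]
    refine interp_bound p (by linarith) q hq' c.r hr _ t (by positivity) ht.1 (2 * c.N) htM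
      (K1 + K2) (fun k ω => c.X false k ω - c.X true k ω) (fun k hk i => ?_) (fun k hk i => ?_)
    · exact ((c.X_AM hT hC hf hg false k hk).1 i).sub ((c.X_AM hT hC hf hg true k hk).1 i)
    · exact (h1 c k hk i).trans (by linarith)
  · simp only [plInterp_refine _ t hδ, plInterp_avg, plInterp_sub]
    refine interp_bound p (by linarith) q hq' (c.r ^ 2) (by positivity) _ t (by positivity) ht.1
      (2 * c.N) htM (K1 + K2) (fun k ω => (fun i => 1 / 2 * (c.X false k ω i + c.X true k ω i))
        - refine2 (fun k => c.Xc k ω) k) (fun k hk i => ?_) (fun k hk i => ?_)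
    · exact ((AM.const (1 / 2)).mul (((c.X_AM hT hC hf hg false k hk).1 i).add
        ((c.X_AM hT hC hf hg true k hk).1 i))).sub ((AM.const (1 / 2)).mul
        (((c.Xc_AM hT hC hf hg (k / 2) (by omega)).1 i).add
        ((c.Xc_AM hT hC hf hg ((k + 1) / 2) (by omega)).1 i)))
    · exact (h2 c k hk i).trans (by linarith)

end Final

end AMil

/-- in the antithetic Milstein setting, with `Xf(t), Xa(t)` the piecewise
linear interpolants of the fine and antithetic paths on the fine grid of spacing `Δt/2`,
`Xc(t)` that of the coarse path on the coarse grid of spacing `Δt`, and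
`X̄(t) = ½(Xf(t) + Xa(t))`, for every `p ≥ 2` there is a constant `K_p`, depending only on
`p, T, f, g`, such that for every `N ≥ 1` (`Δt = T/N`) and every `t ∈ [0,T]`:
`E[‖Xf(t) − Xa(t)‖^p] ≤ K_p Δt^{p/2}` and `E[‖X̄(t) − Xc(t)‖^p] ≤ K_p Δt^p`. -/
theorem antithetic_milstein_interpolant_bounds
    {d m : ℕ} (hd : 0 < d) (hm : 0 < m) (T : ℝ) (hT : 0 < T)
    (f : (Fin d → ℝ) → Fin d → ℝ) (g : (Fin d → ℝ) → Fin d → Fin m → ℝ)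
    (hf : ContDiff ℝ 2 f) (hg : ContDiff ℝ 2 g) (Cfg : ℝ)
    (hf1 : ∀ x, ‖fderiv ℝ f x‖ ≤ Cfg) (hf2 : ∀ x, ‖iteratedFDeriv ℝ 2 f x‖ ≤ Cfg)
    (hg1 : ∀ x, ‖fderiv ℝ g x‖ ≤ Cfg) (hg2 : ∀ x, ‖iteratedFDeriv ℝ 2 g x‖ ≤ Cfg)
    (x₀ : Fin d → ℝ) (p : ℝ) (hp : 2 ≤ p) :
    ∃ K : ℝ, ∀ N : ℕ, 1 ≤ N →
      ∀ (Ω : Type) (_ : MeasurableSpace Ω) (μ : Measure Ω), IsProbabilityMeasure μ →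
      ∀ (W : Fin N → Bool → Ω → Fin m → ℝ) (Xf Xa Xc : ℕ → Ω → Fin d → ℝ),
        (∀ n b j, Measurable fun ω => W n b ω j) →
        (∀ n b j, μ.map (fun ω => W n b ω j) = gaussianReal 0 (Real.toNNReal (T / N / 2))) →
        iIndepFun
          (fun q : Fin N × Bool × Fin m => fun ω => W q.1 q.2.1 ω q.2.2) μ →
        (∀ ω, Xf 0 ω = x₀) → (∀ ω, Xa 0 ω = x₀) → (∀ ω, Xc 0 ω = x₀) →
        (∀ (n : Fin N) ω, Xf (2 * (n : ℕ) + 1) ω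
            = milsteinStep f g (T / N / 2) (Xf (2 * (n : ℕ)) ω) (W n false ω)) →
        (∀ (n : Fin N) ω, Xf (2 * (n : ℕ) + 2) ω
            = milsteinStep f g (T / N / 2) (Xf (2 * (n : ℕ) + 1) ω) (W n true ω)) →
        (∀ (n : Fin N) ω, Xa (2 * (n : ℕ) + 1) ω
            = milsteinStep f g (T / N / 2) (Xa (2 * (n : ℕ)) ω) (W n true ω)) →
        (∀ (n : Fin N) ω, Xa (2 * (n : ℕ) + 2) ω
            = milsteinStep f g (T / N / 2) (Xa (2 * (n : ℕ) + 1) ω) (W n false ω)) →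
        (∀ (n : Fin N) ω, Xc ((n : ℕ) + 1) ω
            = milsteinStep f g (T / N) (Xc (n : ℕ) ω) (W n false ω + W n true ω)) →
        ∀ t ∈ Set.Icc (0 : ℝ) T,
          (∫ ω, ‖plInterp (T / N / 2) (fun k => Xf k ω) t
              - plInterp (T / N / 2) (fun k => Xa k ω) t‖ ^ p ∂μ)
            ≤ K * (T / N) ^ (p / 2) ∧
          (∫ ω, ‖(2⁻¹ : ℝ) • (plInterp (T / N / 2) (fun k => Xf k ω) t
                + plInterp (T / N / 2) (fun k => Xa k ω) t)
              - plInterp (T / N) (fun k => Xc k ω) t‖ ^ p ∂μ)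
            ≤ K * (T / N) ^ p := by
  obtain ⟨C, hC, hfn, hgn⟩ := AMil.nice_all f g hf hg Cfg hf1 hf2 hg1 hg2
  obtain ⟨K, hK⟩ := AMil.final x₀ hT hC hfn hgn p hp
  refine ⟨K, ?_⟩
  intro N hN Ω mΩ μ hμ W Xf Xa Xc Wm Wg Wi f0 a0 c0 f1 f2 a1 a2 cs t ht
  exact hK
    { N := N, hN := hN, Ω := Ω, mΩ := mΩ, μ := μ, prob := hμ, W := W
      X := fun β => bif β then Xa else Xf
      Xc := Xc, Wm := Wm, Wg := Wg, Wi := Wi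
      X0 := fun β ω => by cases β; exacts [f0 ω, a0 ω]
      Xc0 := c0
      Xodd := fun β n ω => by cases β; exacts [f1 n ω, a1 n ω]
      Xeven := fun β n ω => by cases β; exacts [f2 n ω, a2 n ω]
      Xcs := cs } t ht
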